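/- arXiv:2507.10954 — 2 statements merged into one kernel-verified Lean document; each statement's English description precedes it below -/
import Mathlib

section
/- Let n ≥ 2 and let the n-tuples p = (p₁,…,pₙ) and q = (q₁,…,qₙ) ∈ (−1,∞)ⁿ satisfy p ≺ q. (i) If 0 ≤ θ < 1 + min{pₙ, qₙ}, then x ↦ ∏_{j=1}^n β_{p_j}(x) − (∏_{j=1}^n Γ(p_j − θ + 1)/Γ(q_j − θ + 1)) ∏_{j=1}^n β_{q_j}(x) is completely monotonic on (0,∞). (ii) If θ ≤ θ₀, then x ↦ (∏_{j=1}^n Γ(p_j − θ + 1)/Γ(q_j − θ + 1)) ∏_{j=1}^n β_{q_j}(x) − ∏_{j=1}^n β_{p_j}(x) is completely monotonic on (0,∞). Consequently, ∏_{j=1}^n Γ(p_j + 1)/Γ(q_j + 1) < ∏_{j=1}^n β_{p_j}(x)/β_{q_j}(x) < ∏_{j=1}^n Γ(p_j − θ₀ + 1)/Γ(q_j − θ₀ + 1) for all x > 0, and the lower bound is sharp (it is the limit of the middle ratio both as x → 0⁺ and as x → ∞). -/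
/-!
The proof reduces to two factors and one transfer of mass, `(a, b)` against `(a + δ, b - δ)` with
`b ≤ a`. The product `β_a β_b` is the Laplace transform of the convolution `betaConv a b` of the
functions `s ^ a / (1 + e ^ (-s))` and `s ^ b / (1 + e ^ (-s))`. With
`ell θ s = log (s ^ θ / (1 + e ^ (-s)))` this convolution at `u` is the integral over `(0, u)` of
the Beta density `s ^ (a - θ) (u - s) ^ (b - θ)` against the symmetric function
`g s = exp (ell θ s + ell θ (u - s))`. Divided by `Γ(a - θ + 1) Γ(b - θ + 1)`, the Beta densities
before and after the transfer have the same total mass, and their symmetrised difference changes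
sign exactly once on `(0, u / 2]`, being negative near `0` (`betaDiff_sign`). Hence the sign of its
integral against `g` is known as soon as `g` is monotone on `(0, u / 2]` (`beta_compare`).

For `0 ≤ θ` the function `ell θ` is strictly concave, so `g` increases up to the midpoint. For
`θ ≤ θ₀` it is strictly convex, so `g` decreases, because `-θ₀` is the maximum of
`s² eˢ / (eˢ + 1)²` on `(0, ∞)` (`max_at_t0`). In both cases the difference of the normalised
products is the Laplace transform of a positive function (`posCM_step`), hence is completely
monotonic and strictly positive (`posCM_of_laplace`).

The general case follows by joining `q` to `p` through finitely many transfers and telescoping;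
each step multiplies the two-factor difference by the remaining positive factors
(`posCM_of_transfer`). Strict positivity survives, which gives the strict bounds with `θ = 0` and
`θ = θ₀`. The limits come from the asymptotics
`x ^ (p + 1) β_p(x) → Γ(p + 1) / (1 + c)`, where `c = 0` at `0` and `c = 1` at `∞`
(`tendsto_nbeta`): all powers of `x` and all factors `1 + c` cancel in the ratio.
-/

open Real MeasureTheory Set Filter

/-- A function is completely monotonic on `(0, ∞)` if it is infinitely differentiable there
and `(-1)^m h^(m)(x) ≥ 0` for all `m ∈ ℕ` and `x > 0`. -/
def CompletelyMonotonicOn (h : ℝ → ℝ) : Prop :=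
  ContDiffOn ℝ (⊤ : ℕ∞) h (Set.Ioi 0) ∧
  ∀ (m : ℕ) (x : ℝ), 0 < x → 0 ≤ (-1 : ℝ) ^ m * iteratedDerivWithin m h (Set.Ioi 0) x

/-- `p ≺ q` : `p` is (strictly) majorized by `q`. -/
def Majorizes {n : ℕ} (p q : Fin n → ℝ) : Prop :=
  (∀ i j : Fin n, i ≤ j → p j ≤ p i) ∧
  (∀ i j : Fin n, i ≤ j → q j ≤ q i) ∧
  (∀ k : Fin n, ∑ j ∈ Finset.univ.filter (fun j => j ≤ k), p j ≤
      ∑ j ∈ Finset.univ.filter (fun j => j ≤ k), q j) ∧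
  (∑ j, p j = ∑ j, q j) ∧ p ≠ q

/-- `β_p(x) = ∫₀^∞ t^p e^{-xt}/(1 + e^{-t}) dt`, the Nielsen beta function of order `p`. -/
noncomputable def nbeta (p x : ℝ) : ℝ :=
  ∫ t in Set.Ioi (0 : ℝ), t ^ p * Real.exp (-x * t) / (1 + Real.exp (-t))

/-! ### Strictly positive completely monotonic functions -/

/-- Completely monotonic and strictly positive on `(0, ∞)`. -/
def PosCM (f : ℝ → ℝ) : Prop := CompletelyMonotonicOn f ∧ ∀ x : ℝ, 0 < x → 0 < f x

lemma CompletelyMonotonicOn.congr {f g : ℝ → ℝ} (hf : CompletelyMonotonicOn f)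
    (h : ∀ x, 0 < x → g x = f x) : CompletelyMonotonicOn g := by
  refine ⟨hf.1.congr fun x hx => h x hx, fun m x hx => ?_⟩
  rw [iteratedDerivWithin_congr (s := Ioi 0) (g := f) (fun y hy => h y hy) (mem_Ioi.2 hx)]
  exact hf.2 m x hx

lemma PosCM.congr {f g : ℝ → ℝ} (hf : PosCM f) (h : ∀ x, 0 < x → g x = f x) : PosCM g :=
  ⟨hf.1.congr h, fun x hx => by rw [h x hx]; exact hf.2 x hx⟩

lemma PosCM.add {f g : ℝ → ℝ} (hf : PosCM f) (hg : PosCM g) : PosCM (fun x => f x + g x) := by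
  refine ⟨⟨hf.1.1.add hg.1.1, fun m x hx => ?_⟩, fun x hx => add_pos (hf.2 x hx) (hg.2 x hx)⟩
  have e := iteratedDerivWithin_add (n := m) (mem_Ioi.2 hx) (uniqueDiffOn_Ioi 0)
    ((hf.1.1 x hx).of_le (by exact_mod_cast le_top)) ((hg.1.1 x hx).of_le (by exact_mod_cast le_top))
  change 0 ≤ (-1 : ℝ) ^ m * iteratedDerivWithin m (f + g) (Ioi 0) x
  rw [e, mul_add]
  exact add_nonneg (hf.1.2 m x hx) (hg.1.2 m x hx)

lemma PosCM.mul {f g : ℝ → ℝ} (hf : PosCM f) (hg : PosCM g) : PosCM (fun x => f x * g x) := by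
  refine ⟨⟨hf.1.1.mul hg.1.1, fun m x hx => ?_⟩, fun x hx => mul_pos (hf.2 x hx) (hg.2 x hx)⟩
  have e := iteratedDerivWithin_mul (n := m) (mem_Ioi.2 hx) (uniqueDiffOn_Ioi 0)
    ((hf.1.1 x hx).of_le (by exact_mod_cast le_top)) ((hg.1.1 x hx).of_le (by exact_mod_cast le_top))
  change 0 ≤ (-1 : ℝ) ^ m * iteratedDerivWithin m (f * g) (Ioi 0) x
  rw [e, Finset.mul_sum]
  refine Finset.sum_nonneg fun i hi => ?_
  have hi' : i ≤ m := by simpa [Nat.lt_succ_iff] using hi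
  have h1 := hf.1.2 i x hx
  have h2 := hg.1.2 (m - i) x hx
  have h3 : (-1 : ℝ) ^ m = (-1) ^ i * (-1) ^ (m - i) := by rw [← pow_add]; congr 1; omega
  rw [h3]
  calc (0 : ℝ) ≤ (m.choose i : ℝ) * (((-1) ^ i * iteratedDerivWithin i f (Ioi 0) x) *
        ((-1) ^ (m - i) * iteratedDerivWithin (m - i) g (Ioi 0) x)) := by positivity
    _ = _ := by ring

lemma PosCM.const {c : ℝ} (hc : 0 < c) : PosCM (fun _ => c) := by
  refine ⟨⟨contDiffOn_const, fun m x hx => ?_⟩, fun _ _ => hc⟩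
  rw [iteratedDerivWithin_const]
  split_ifs with h
  · subst h; simpa using hc.le
  · simp

lemma PosCM.prod {ι : Type*} (s : Finset ι) {f : ι → ℝ → ℝ} (hf : ∀ i ∈ s, PosCM (f i)) :
    PosCM (fun x => ∏ i ∈ s, f i x) := by
  classical
  induction s using Finset.induction_on with
  | empty => simpa using PosCM.const one_pos
  | insert a s ha ih =>
    refine ((hf a (by simp)).mul (ih fun i hi => hf i (by simp [hi]))).congr fun x _ => ?_
    rw [Finset.prod_insert ha]

open ProbabilityTheory in
/-- The easy half of Bernstein's theorem, read off from Mathlib's derivatives of the moment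
generating function of `u ↦ -u` for the measure with density `k` on `(0, ∞)`. -/
lemma posCM_of_laplace {k f : ℝ → ℝ} (hk : ∀ u, 0 < u → 0 < k u)
    (hint : ∀ x : ℝ, 0 < x → IntegrableOn (fun u => Real.exp (-x * u) * k u) (Ioi 0))
    (hf : ∀ x : ℝ, 0 < x → f x = ∫ u in Ioi (0 : ℝ), Real.exp (-x * u) * k u) : PosCM f := by
  set ν : Measure ℝ := volume.restrict (Ioi (0 : ℝ)) with hν
  have hmk : AEMeasurable k ν := by
    have h1 := (hint 1 one_pos).aestronglyMeasurable.aemeasurable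
    have h2 : AEMeasurable (fun u : ℝ => Real.exp u * (Real.exp (-1 * u) * k u)) ν :=
      (Real.measurable_exp.aemeasurable).mul h1
    refine h2.congr (Eventually.of_forall fun u => ?_)
    simp only
    rw [← mul_assoc, ← Real.exp_add]; simp
  have hkν : ∀ᵐ u ∂ν, 0 < u := ae_restrict_mem measurableSet_Ioi
  set μ : Measure ℝ := ν.withDensity (fun u => ENNReal.ofReal (k u)) with hμ
  have hkμ : ∀ᵐ u ∂μ, 0 < u := (withDensity_absolutelyContinuous ν _).ae_le hkν
  have hmk' : AEMeasurable (fun u => ENNReal.ofReal (k u)) ν := hmk.ennreal_ofReal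
  have hset : Ioi (0 : ℝ) ⊆ interior (integrableExpSet (fun u : ℝ => -u) μ) := by
    refine interior_maximal ?_ isOpen_Ioi
    intro x hx
    change Integrable _ μ
    rw [hμ, integrable_withDensity_iff_integrable_smul₀' hmk' (by simp)]
    refine (hint x hx).congr ?_
    filter_upwards [hkν] with u hu
    simp only [smul_eq_mul, ENNReal.toReal_ofReal (hk u hu).le]
    rw [mul_comm]; congr 2; ring
  have hfm : ∀ x : ℝ, 0 < x → f x = mgf (fun u : ℝ => -u) μ x := by
    intro x hx
    rw [hf x hx, mgf, hμ, integral_withDensity_eq_integral_toReal_smul₀ hmk' (by simp)]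
    refine integral_congr_ae ?_
    filter_upwards [hkν] with u hu
    simp only [smul_eq_mul, ENNReal.toReal_ofReal (hk u hu).le]
    rw [mul_comm]; congr 2; ring
  have hcm : CompletelyMonotonicOn (mgf (fun u : ℝ => -u) μ) := by
    refine ⟨?_, fun m x hx => ?_⟩
    · exact (analyticOnNhd_mgf.mono hset).contDiffOn (uniqueDiffOn_Ioi 0)
    · rw [iteratedDerivWithin_of_isOpen isOpen_Ioi (mem_Ioi.2 hx), iteratedDeriv_mgf (hset hx),
        ← integral_const_mul]
      refine integral_nonneg_of_ae ?_
      filter_upwards [hkμ] with u hu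
      have : (-1 : ℝ) ^ m * ((-u) ^ m * Real.exp (x * -u)) = u ^ m * Real.exp (x * -u) := by
        rw [← mul_assoc, ← mul_pow]; simp
      simp only [Pi.zero_apply, this]
      positivity
  refine ⟨hcm.congr hfm, fun x hx => ?_⟩
  rw [hf x hx, setIntegral_pos_iff_support_of_nonneg_ae _ (hint x hx)]
  · refine lt_of_lt_of_le ?_ (measure_mono (μ := volume) (s := Ioi (0 : ℝ)) ?_)
    · simp
    · intro u hu
      exact ⟨(mul_pos (Real.exp_pos _) (hk u hu)).ne', hu⟩
  · filter_upwards [hkν] with u hu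
    exact (mul_pos (Real.exp_pos _) (hk u hu)).le

/-! ### Chains of transfers -/

/-- Reduction to single transfers, for an abstract family `B r` with `m < r`. If moving mass `δ`
from the larger to the smaller of two exponents always changes the product of two factors in the
direction of `σ`, then so does passing from `q` to any `p` that it majorizes. The induction is on
the number of indices where `p` and `q` differ. Only `p` is assumed sorted, since a transfer may
destroy the order of `q`. -/
lemma posCM_of_transfer {n : ℕ} (m σ : ℝ) (B : ℝ → ℝ → ℝ) (hB : ∀ r, m < r → PosCM (B r))
    (hstep : ∀ a b δ : ℝ, b ≤ a → 0 < δ → m < b - δ →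
      PosCM (fun x => σ * (B a x * B b x - B (a + δ) x * B (b - δ) x)))
    (p : Fin n → ℝ) (hp : ∀ i j, i ≤ j → p j ≤ p i) :
    ∀ (N : ℕ) (q : Fin n → ℝ), (Finset.univ.filter fun j => p j ≠ q j).card = N →
      (∀ j, m < q j) →
      (∀ k : Fin n, ∑ j ∈ Finset.univ.filter (fun j => j ≤ k), p j ≤
        ∑ j ∈ Finset.univ.filter (fun j => j ≤ k), q j) →
      ∑ j, p j = ∑ j, q j → p ≠ q →
      PosCM (fun x => σ * (∏ j, B (p j) x - ∏ j, B (q j) x)) := by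
  intro N
  induction N using Nat.strong_induction_on with
  | _ N ih =>
  intro q hN hq hpart hsum hne
  -- `k` is the first index at which `q` lies below `p`
  have hex : ∃ k, q k < p k := by
    by_contra! h
    exact hne (funext fun j =>
      (Finset.sum_eq_sum_iff_of_le (fun i _ => h i)).1 hsum j (Finset.mem_univ j))
  obtain ⟨k, hk, hkmin⟩ : ∃ k, q k < p k ∧ ∀ i, i < k → p i ≤ q i := by
    obtain ⟨k, hk⟩ := (Set.toFinite {k | q k < p k}).exists_minimal hex
    refine ⟨k, hk.1, fun i hi => ?_⟩
    by_contra! hlt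
    exact absurd (hk.2 (show i ∈ {k | q k < p k} from hlt) hi.le) (not_le.2 hi)
  -- the partial sums up to `k` force some earlier entry of `q` to exceed that of `p`; mass is moved
  -- from this index `j` to `k`
  obtain ⟨j, hjk, hj⟩ : ∃ j, j < k ∧ p j < q j := by
    by_contra! h
    refine absurd (hpart k) (not_le.2 (Finset.sum_lt_sum (fun i hi => ?_) ⟨k, by simp, hk⟩))
    rcases (Finset.mem_filter.1 hi).2.lt_or_eq with h1 | h1
    · exact h i h1
    · rw [h1]; exact hk.le
  set δ := min (q j - p j) (p k - q k) with hδ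
  have hδpos : 0 < δ := lt_min (by linarith) (by linarith)
  have hδ1 : δ ≤ q j - p j := min_le_left _ _
  have hδ2 : δ ≤ p k - q k := min_le_right _ _
  have hpjk := hp j k hjk.le
  set q' : Fin n → ℝ := fun i => q i - (if i = j then δ else 0) + (if i = k then δ else 0) with hq'
  have hq'j : q' j = q j - δ := by simp [hq', hjk.ne]
  have hq'k : q' k = q k + δ := by simp [hq', hjk.ne']
  have hq'o : ∀ i, i ≠ j → i ≠ k → q' i = q i := fun i h1 h2 => by simp [hq', h1, h2]
  have hm' : ∀ i, m < q' i := by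
    intro i
    by_cases h1 : i = j
    · subst h1; rw [hq'j]; linarith [hq k]
    by_cases h2 : i = k
    · subst h2; rw [hq'k]; linarith [hq i]
    · rw [hq'o i h1 h2]; exact hq i
  have hsum' : ∑ i, p i = ∑ i, q' i := by
    simp only [hq', Finset.sum_add_distrib, Finset.sum_sub_distrib, Finset.sum_ite_eq',
      Finset.mem_univ, if_true]
    linarith
  have hpart' : ∀ l : Fin n, ∑ j ∈ Finset.univ.filter (fun j => j ≤ l), p j ≤
        ∑ j ∈ Finset.univ.filter (fun j => j ≤ l), q' j := by
    intro l
    by_cases hl : k ≤ l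
    · have hjl : j ≤ l := hjk.le.trans hl
      simp only [hq', Finset.sum_add_distrib, Finset.sum_sub_distrib, Finset.sum_ite_eq',
        Finset.mem_filter, Finset.mem_univ, true_and, hl, hjl, if_true]
      linarith [hpart l]
    · refine Finset.sum_le_sum fun i hi => ?_
      have hik : i < k := lt_of_le_of_lt (Finset.mem_filter.1 hi).2 (not_le.1 hl)
      by_cases h1 : i = j
      · subst h1; rw [hq'j]; linarith
      · rw [hq'o i h1 hik.ne]; exact hkmin i hik
  have hcard : (Finset.univ.filter fun j => p j ≠ q' j).card < N := by
    rw [← hN]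
    refine Finset.card_lt_card (Finset.ssubset_iff_of_subset ?_ |>.2 ?_)
    · intro i hi
      have hi' := (Finset.mem_filter.1 hi).2
      refine Finset.mem_filter.2 ⟨Finset.mem_univ _, fun h => hi' ?_⟩
      by_cases h1 : i = j
      · subst h1; exact absurd h hj.ne
      by_cases h2 : i = k
      · subst h2; exact absurd h hk.ne'
      · rw [hq'o i h1 h2, h]
    · -- `δ` is chosen so that one of the two moved entries now agrees with `p`
      rcases min_choice (q j - p j) (p k - q k) with h | h
      · refine ⟨j, by simp [hj.ne], ?_⟩
        have : p j = q' j := by rw [hq'j, hδ, h]; ring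
        simp [this]
      · refine ⟨k, by simp [hk.ne'], ?_⟩
        have : p k = q' k := by rw [hq'k, hδ, h]; ring
        simp [this]
  have hmove : PosCM (fun x => σ * (∏ i, B (q' i) x - ∏ i, B (q i) x)) := by
    have h1 := hstep (q j - δ) (q k + δ) δ (by linarith) hδpos (by simpa using hq k)
    have h2 : PosCM (fun x => ∏ i ∈ (Finset.univ.erase j).erase k, B (q i) x) :=
      PosCM.prod _ fun i _ => hB _ (hq i)
    refine (h1.mul h2).congr fun x _ => ?_
    have hkm : k ∈ Finset.univ.erase j := by simp [hjk.ne']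
    rw [← Finset.mul_prod_erase _ _ (Finset.mem_univ j), ← Finset.mul_prod_erase _ _ hkm,
      ← Finset.mul_prod_erase _ (fun i => B (q i) x) (Finset.mem_univ j),
      ← Finset.mul_prod_erase _ (fun i => B (q i) x) hkm, hq'j, hq'k]
    have : ∏ i ∈ (Finset.univ.erase j).erase k, B (q' i) x =
        ∏ i ∈ (Finset.univ.erase j).erase k, B (q i) x := by
      refine Finset.prod_congr rfl fun i hi => ?_
      simp only [Finset.mem_erase, Finset.mem_univ, and_true] at hi
      rw [hq'o i hi.2 hi.1]
    rw [this, sub_add_cancel, add_sub_cancel_right]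
    ring
  by_cases hpq : p = q'
  · rw [hpq]; exact hmove
  · refine ((ih _ hcard q' rfl hm' hpart' hsum' hpq).add hmove).congr fun x _ => ?_
    ring

/-! ### Comparison of Beta densities -/

/-- The Beta integral on `(0, u)`, over the reals. -/
lemma beta_Ioo {a b u : ℝ} (ha : -1 < a) (hb : -1 < b) (hu : 0 < u) :
    IntegrableOn (fun s => s ^ a * (u - s) ^ b) (Ioo 0 u) ∧
    ∫ s in Ioo 0 u, s ^ a * (u - s) ^ b =
      u ^ (a + b + 1) * (Real.Gamma (a + 1) * Real.Gamma (b + 1) / Real.Gamma (a + b + 2)) := by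
  have hG : 0 < u ^ (a + b + 1) *
      (Real.Gamma (a + 1) * Real.Gamma (b + 1) / Real.Gamma (a + b + 2)) := by
    have := Real.Gamma_pos_of_pos (show 0 < a + 1 by linarith)
    have := Real.Gamma_pos_of_pos (show 0 < b + 1 by linarith)
    have := Real.Gamma_pos_of_pos (show 0 < a + b + 2 by linarith)
    positivity
  have h : ∫ s in Ioo 0 u, s ^ a * (u - s) ^ b =
      u ^ (a + b + 1) * (Real.Gamma (a + 1) * Real.Gamma (b + 1) / Real.Gamma (a + b + 2)) := by
    have h1 := Complex.betaIntegral_scaled ((a + 1 : ℝ) : ℂ) ((b + 1 : ℝ) : ℂ) hu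
    rw [intervalIntegral.integral_of_le hu.le, integral_Ioc_eq_integral_Ioo,
      Complex.betaIntegral_eq_Gamma_mul_div _ _ (by simp; linarith) (by simp; linarith)] at h1
    have h2 : ∫ s in Ioo 0 u, ((s : ℂ) ^ (((a + 1 : ℝ) : ℂ) - 1) *
        ((u : ℂ) - s) ^ (((b + 1 : ℝ) : ℂ) - 1)) =
        ∫ s in Ioo 0 u, ((s ^ a * (u - s) ^ b : ℝ) : ℂ) := by
      refine setIntegral_congr_fun measurableSet_Ioo fun s hs => ?_
      have e1 : ((a + 1 : ℝ) : ℂ) - 1 = (a : ℂ) := by push_cast; ring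
      have e2 : ((b + 1 : ℝ) : ℂ) - 1 = (b : ℂ) := by push_cast; ring
      simp only [e1, e2]
      rw [← Complex.ofReal_sub, ← Complex.ofReal_cpow hs.1.le,
        ← Complex.ofReal_cpow (by linarith [hs.2]), ← Complex.ofReal_mul]
    rw [h2, integral_complex_ofReal, ← Complex.ofReal_add, Complex.Gamma_ofReal,
      Complex.Gamma_ofReal, Complex.Gamma_ofReal] at h1
    have e3 : ((a + 1 + (b + 1) : ℝ) : ℂ) - 1 = ((a + b + 1 : ℝ) : ℂ) := by push_cast; ring
    rw [e3, ← Complex.ofReal_cpow hu.le, ← Complex.ofReal_mul, ← Complex.ofReal_div,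
      ← Complex.ofReal_mul, show a + 1 + (b + 1) = a + b + 2 by ring] at h1
    exact_mod_cast h1
  -- a non-integrable function would have integral `0`, but the value of the integral is positive
  refine ⟨?_, h⟩
  by_contra hn
  rw [integral_undef hn] at h
  exact hG.ne h

/-- `cosh (D L) / cosh (d L)` is strictly increasing in `|L|` when `0 ≤ d < D`. By the
product-to-sum formula this reduces to the monotonicity of `cosh`. -/
lemma cosh_ratio {d D L L' : ℝ} (hd : 0 ≤ d) (hD : d < D) (hL : |L| < |L'|) :
    cosh (D * L) * cosh (d * L') < cosh (D * L') * cosh (d * L) := by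
  have key : ∀ l l' : ℝ, 0 ≤ l → l < l' →
      cosh (D * l) * cosh (d * l') < cosh (D * l') * cosh (d * l) := by
    intro l l' h0 h1
    have hD0 : 0 ≤ D := hd.trans hD.le
    have e1 : cosh (D * l + d * l') < cosh (D * l' + d * l) := by
      rw [cosh_lt_cosh, abs_of_nonneg (add_nonneg (mul_nonneg hD0 h0)
          (mul_nonneg hd (h0.trans h1.le))), abs_of_nonneg (add_nonneg (mul_nonneg hD0
          (h0.trans h1.le)) (mul_nonneg hd h0))]
      nlinarith
    have e2 : cosh (D * l - d * l') ≤ cosh (D * l' - d * l) := by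
      rw [cosh_le_cosh, abs_of_nonneg (by nlinarith : 0 ≤ D * l' - d * l), abs_le]
      constructor <;> nlinarith
    rw [cosh_add, cosh_add] at e1
    rw [cosh_sub, cosh_sub] at e2
    linarith
  have h := key |L| |L'| (abs_nonneg _) hL
  have c : ∀ r l : ℝ, 0 ≤ r → cosh (r * |l|) = cosh (r * l) := fun r l hr => by
    rw [← cosh_abs (r * l), abs_mul, abs_of_nonneg hr]
  rwa [c D L (by linarith), c d L' hd, c D L' (by linarith), c d L hd] at h

/-- Positivity of an integral whose integrand may vanish at two exceptional points. -/
lemma setIntegral_Ioo_pos {u t t' : ℝ} (hu : 0 < u) {F : ℝ → ℝ} (hF : IntegrableOn F (Ioo 0 u))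
    (h0 : ∀ s ∈ Ioo 0 u, 0 ≤ F s) (h1 : ∀ s ∈ Ioo 0 u, s ≠ t → s ≠ t' → 0 < F s) :
    0 < ∫ s in Ioo 0 u, F s := by
  rw [setIntegral_pos_iff_support_of_nonneg_ae _ hF]
  · have h2 : volume (Ioo 0 u \ ({t, t'} : Set ℝ)) = volume (Ioo 0 u) :=
      measure_sdiff_null (Set.Finite.measure_zero (by simp) _)
    refine lt_of_lt_of_le ?_ (measure_mono (μ := volume) (s := Ioo 0 u \ ({t, t'} : Set ℝ)) ?_)
    · rw [h2]; simpa using hu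
    · intro s hs
      have hs2 : s ≠ t ∧ s ≠ t' := by simpa using hs.2
      exact ⟨(h1 s hs.1 hs2.1 hs2.2).ne', hs.1⟩
  · filter_upwards [ae_restrict_mem measurableSet_Ioo] with s hs
    exact h0 s hs

lemma reflect_Ioo {u : ℝ} (hu : 0 < u) {F G : ℝ → ℝ} (hF : IntegrableOn F (Ioo 0 u))
    (hG : ∀ s ∈ Ioo 0 u, G s = F (u - s)) :
    IntegrableOn G (Ioo 0 u) ∧ ∫ s in Ioo 0 u, G s = ∫ s in Ioo 0 u, F s := by
  have hFi : IntervalIntegrable F volume 0 u :=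
    (intervalIntegrable_iff_integrableOn_Ioo_of_le hu.le).2 hF
  have h1 := (hFi.comp_sub_left u).symm
  rw [sub_self, sub_zero] at h1
  have h2 := (intervalIntegrable_iff_integrableOn_Ioo_of_le hu.le).1 h1
  refine ⟨h2.congr_fun (fun s hs => (hG s hs).symm) measurableSet_Ioo, ?_⟩
  rw [setIntegral_congr_fun measurableSet_Ioo hG]
  have h3 := intervalIntegral.integral_comp_sub_left (a := 0) (b := u) F u
  rw [sub_self, sub_zero, intervalIntegral.integral_of_le hu.le,
    intervalIntegral.integral_of_le hu.le, integral_Ioc_eq_integral_Ioo,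
    integral_Ioc_eq_integral_Ioo] at h3
  exact h3

lemma rpow_symm_eq_cosh {u s : ℝ} (hs : s ∈ Ioo 0 u) (α β : ℝ) :
    s ^ α * (u - s) ^ β + s ^ β * (u - s) ^ α =
      2 * Real.exp ((α + β) / 2 * (Real.log s + Real.log (u - s))) *
        cosh ((α - β) / 2 * (Real.log s - Real.log (u - s))) := by
  have h2 : 0 < u - s := by linarith [hs.2]
  rw [Real.rpow_def_of_pos hs.1, Real.rpow_def_of_pos hs.1, Real.rpow_def_of_pos h2,
    Real.rpow_def_of_pos h2, cosh_eq, ← Real.exp_add, ← Real.exp_add]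
  rw [mul_comm (2 : ℝ), mul_assoc, mul_div_cancel₀ _ (two_ne_zero), mul_add, ← Real.exp_add,
    ← Real.exp_add]
  congr 2 <;> ring

/-- The difference of the symmetrised Beta densities with exponents `(α, β)` and
`(α + δ, β - δ)` on `(0, u)`, both normalised by the Gamma factors. -/
noncomputable def betaDiff (u α β δ s : ℝ) : ℝ :=
  (Real.Gamma (α + 1) * Real.Gamma (β + 1))⁻¹ *
      (s ^ α * (u - s) ^ β + s ^ β * (u - s) ^ α) -
    (Real.Gamma (α + δ + 1) * Real.Gamma (β - δ + 1))⁻¹ *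
      (s ^ (α + δ) * (u - s) ^ (β - δ) + s ^ (β - δ) * (u - s) ^ (α + δ))

lemma betaDiff_symm (u α β δ s : ℝ) : betaDiff u α β δ (u - s) = betaDiff u α β δ s := by
  simp only [betaDiff, sub_sub_cancel]; ring

lemma continuousOn_betaDiff (u α β δ : ℝ) : ContinuousOn (betaDiff u α β δ) (Ioo 0 u) := by
  have r1 : ∀ r : ℝ, ContinuousOn (fun s : ℝ => s ^ r) (Ioo 0 u) := fun r s hs =>
    (Real.continuousAt_rpow_const _ _ (Or.inl hs.1.ne')).continuousWithinAt
  have r2 : ∀ r : ℝ, ContinuousOn (fun s : ℝ => (u - s) ^ r) (Ioo 0 u) := fun r =>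
    (continuousOn_const.sub continuousOn_id).rpow_const fun s hs =>
      Or.inl (sub_pos.2 hs.2).ne'
  exact (continuousOn_const.mul (((r1 _).mul (r2 _)).add ((r1 _).mul (r2 _)))).sub
    (continuousOn_const.mul (((r1 _).mul (r2 _)).add ((r1 _).mul (r2 _))))

lemma integral_betaDiff {u α β δ : ℝ} (hu : 0 < u) (hba : β ≤ α) (hδ : 0 < δ)
    (hB : -1 < β - δ) :
    IntegrableOn (betaDiff u α β δ) (Ioo 0 u) ∧ ∫ s in Ioo 0 u, betaDiff u α β δ s = 0 := by
  have hα1 : -1 < α := by linarith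
  have hβ1 : -1 < β := by linarith
  have hA1 : -1 < α + δ := by linarith
  have g1 := Real.Gamma_pos_of_pos (show 0 < α + 1 by linarith)
  have g2 := Real.Gamma_pos_of_pos (show 0 < β + 1 by linarith)
  have g3 := Real.Gamma_pos_of_pos (show 0 < α + δ + 1 by linarith)
  have g4 := Real.Gamma_pos_of_pos (show 0 < β - δ + 1 by linarith)
  have g5 := Real.Gamma_pos_of_pos (show 0 < α + β + 2 by linarith)
  have i1 := beta_Ioo hα1 hβ1 hu
  have i2 := beta_Ioo hβ1 hα1 hu
  have i3 := beta_Ioo hA1 hB hu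
  have i4 := beta_Ioo hB hA1 hu
  have k1 := (i1.1.add i2.1).const_mul (Real.Gamma (α + 1) * Real.Gamma (β + 1))⁻¹
  have k2 := (i3.1.add i4.1).const_mul (Real.Gamma (α + δ + 1) * Real.Gamma (β - δ + 1))⁻¹
  refine ⟨k1.sub k2, (integral_sub k1 k2).trans ?_⟩
  simp only [Pi.add_apply]
  rw [integral_const_mul, integral_const_mul, integral_add i1.1 i2.1, integral_add i3.1 i4.1,
    i1.2, i2.2, i3.2, i4.2, add_comm β α,
    show α + δ + (β - δ) = α + β by ring, show β - δ + (α + δ) = α + β by ring]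
  field_simp
  ring

/-- `betaDiff` changes sign exactly once on `(0, u / 2]`: a zero exists since the mean is zero, and
it is unique because `cosh (D L) / cosh (d L)`, `d < D`, is strictly increasing in `|L|`. -/
lemma betaDiff_sign {u α β δ : ℝ} (hu : 0 < u) (hba : β ≤ α) (hδ : 0 < δ) (hB : -1 < β - δ) :
    ∃ t, 0 < t ∧ t ≤ u / 2 ∧ (∀ s, 0 < s → s < t → betaDiff u α β δ s < 0) ∧
      (∀ s, t < s → s ≤ u / 2 → 0 < betaDiff u α β δ s) := by
  obtain ⟨hHint, hH0⟩ := integral_betaDiff hu hba hδ hB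
  have hHcont := continuousOn_betaDiff u α β δ
  obtain ⟨c1, hc1⟩ : ∃ c, c = (Real.Gamma (α + 1) * Real.Gamma (β + 1))⁻¹ := ⟨_, rfl⟩
  obtain ⟨c2, hc2⟩ : ∃ c, c = (Real.Gamma (α + δ + 1) * Real.Gamma (β - δ + 1))⁻¹ := ⟨_, rfl⟩
  have hc2p : 0 < c2 := by
    have g3 := Real.Gamma_pos_of_pos (show 0 < α + δ + 1 by linarith)
    have g4 := Real.Gamma_pos_of_pos (show 0 < β - δ + 1 by linarith)
    rw [hc2]; positivity
  have hHcosh : ∀ s ∈ Ioo 0 u, betaDiff u α β δ s =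
      2 * Real.exp ((α + β) / 2 * (Real.log s + Real.log (u - s))) *
        (c1 * cosh ((α - β) / 2 * (Real.log s - Real.log (u - s))) -
          c2 * cosh (((α - β) / 2 + δ) * (Real.log s - Real.log (u - s)))) := by
    intro s hs
    rw [betaDiff, ← hc1, ← hc2]
    rw [rpow_symm_eq_cosh hs, rpow_symm_eq_cosh hs, show α + δ + (β - δ) = α + β by ring,
      show (α + δ - (β - δ)) / 2 = (α - β) / 2 + δ by ring]
    ring
  -- the function has mean zero, hence a zero
  obtain ⟨t₁, ht₁, ht₁0⟩ : ∃ t ∈ Ioo 0 u, betaDiff u α β δ t = 0 := by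
    obtain ⟨s1, hs1, hs1'⟩ : ∃ s ∈ Ioo 0 u, betaDiff u α β δ s ≤ 0 := by
      by_contra! h
      exact (setIntegral_Ioo_pos (t := 0) (t' := 0) hu hHint (fun s hs => (h s hs).le)
        (fun s hs _ _ => h s hs)).ne' hH0
    obtain ⟨s2, hs2, hs2'⟩ : ∃ s ∈ Ioo 0 u, 0 ≤ betaDiff u α β δ s := by
      by_contra! h
      have := setIntegral_Ioo_pos (t := 0) (t' := 0) hu hHint.neg
        (fun s hs => by simpa using (h s hs).le) (fun s hs _ _ => by simpa using h s hs)
      rw [integral_neg' , hH0] at this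
      simp at this
    exact isPreconnected_Ioo.intermediate_value hs1 hs2 hHcont ⟨hs1', hs2'⟩
  obtain ⟨t, ht, htu, ht0⟩ : ∃ t, 0 < t ∧ t ≤ u / 2 ∧ betaDiff u α β δ t = 0 := by
    rcases le_total t₁ (u / 2) with h | h
    · exact ⟨t₁, ht₁.1, h, ht₁0⟩
    · exact ⟨u - t₁, by linarith [ht₁.2], by linarith, by rw [betaDiff_symm, ht₁0]⟩
  have hlog : ∀ s s', 0 < s → s < s' → s' ≤ u / 2 →
      |Real.log s' - Real.log (u - s')| < |Real.log s - Real.log (u - s)| := by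
    intro s s' h1 h2 h3
    have l1 := Real.log_lt_log h1 h2
    have l2 : Real.log (u - s') < Real.log (u - s) := Real.log_lt_log (by linarith) (by linarith)
    have l3 : Real.log s' ≤ Real.log (u - s') := Real.log_le_log (by linarith) (by linarith)
    rw [abs_of_nonpos (by linarith), abs_of_nonpos (by linarith)]
    linarith
  have hd : 0 ≤ (α - β) / 2 := by linarith
  have hdD : (α - β) / 2 < (α - β) / 2 + δ := by linarith
  have ht0' : c1 * cosh ((α - β) / 2 * (Real.log t - Real.log (u - t))) =
      c2 * cosh (((α - β) / 2 + δ) * (Real.log t - Real.log (u - t))) := by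
    rw [hHcosh t ⟨ht, by linarith⟩] at ht0
    rcases mul_eq_zero.1 ht0 with h | h
    · exact absurd h (by positivity)
    · linarith
  refine ⟨t, ht, htu, fun s h1 h => ?_, fun s h h2 => ?_⟩
  · have hct := cosh_pos ((α - β) / 2 * (Real.log t - Real.log (u - t)))
    rw [hHcosh s ⟨h1, by linarith⟩]
    have hc := mul_lt_mul_of_pos_left (cosh_ratio hd hdD (hlog s t h1 h htu)) hc2p
    rw [← mul_assoc, ← ht0'] at hc
    exact mul_neg_of_pos_of_neg (by positivity) (by nlinarith)
  · have hct := cosh_pos ((α - β) / 2 * (Real.log t - Real.log (u - t)))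
    rw [hHcosh s ⟨by linarith, by linarith⟩]
    have hc := mul_lt_mul_of_pos_left (cosh_ratio hd hdD (hlog t s ht h h2)) hc2p
    rw [← mul_assoc, ← mul_assoc, ← ht0'] at hc
    exact mul_pos (by positivity) (by nlinarith)

/-- Integrals of a symmetric function `g` against two Beta densities of equal mass, where `σ g` is
strictly increasing on `(0, u / 2]`. If `t` is the sign change of `betaDiff`, then
`betaDiff s * σ (g s - g t)` is positive off `t` and `u - t`, and subtracting the constant `g t`
does not alter the integral because `betaDiff` has mean zero. -/
lemma beta_compare {u α β δ σ : ℝ} (hu : 0 < u) (hba : β ≤ α) (hδ : 0 < δ) (hB : -1 < β - δ)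
    (g : ℝ → ℝ) (hsymm : ∀ s, g (u - s) = g s)
    (hg : ∀ s s', 0 < s → s < s' → s' ≤ u / 2 → 0 < σ * (g s' - g s))
    (j1 : IntegrableOn (fun s => s ^ α * (u - s) ^ β * g s) (Ioo 0 u))
    (j3 : IntegrableOn (fun s => s ^ (α + δ) * (u - s) ^ (β - δ) * g s) (Ioo 0 u)) :
    0 < σ * ((∫ s in Ioo 0 u, s ^ α * (u - s) ^ β * g s) /
          (Real.Gamma (α + 1) * Real.Gamma (β + 1)) -
        (∫ s in Ioo 0 u, s ^ (α + δ) * (u - s) ^ (β - δ) * g s) /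
          (Real.Gamma (α + δ + 1) * Real.Gamma (β - δ + 1))) := by
  obtain ⟨hHint, hH0⟩ := integral_betaDiff hu hba hδ hB
  obtain ⟨t, ht, htu, hneg, hpos'⟩ := betaDiff_sign hu hba hδ hB
  have hhalf : ∀ s, 0 < s → s ≤ u / 2 → s ≠ t →
      0 < betaDiff u α β δ s * (σ * (g s - g t)) := by
    intro s h1 h2 h3
    rcases lt_or_gt_of_ne h3 with h | h
    · exact mul_pos_of_neg_of_neg (hneg s h1 h) (by linarith [hg s t h1 h htu])
    · exact mul_pos (hpos' s h h2) (hg t s ht h h2)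
  have hpos : ∀ s ∈ Ioo 0 u, s ≠ t → s ≠ u - t → 0 < betaDiff u α β δ s * (σ * (g s - g t)) := by
    intro s hs h1 h2
    rcases le_total s (u / 2) with h | h
    · exact hhalf s hs.1 h h1
    · have := hhalf (u - s) (by linarith [hs.2]) (by linarith) (fun e => h2 (by linarith))
      rwa [betaDiff_symm, hsymm] at this
  have hnonneg : ∀ s ∈ Ioo 0 u, 0 ≤ betaDiff u α β δ s * (σ * (g s - g t)) := by
    intro s hs
    by_cases h1 : s = t
    · simp [h1]
    by_cases h2 : s = u - t
    · simp [h2, hsymm]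
    exact (hpos s hs h1 h2).le
  have j2 := reflect_Ioo (G := fun s => s ^ β * (u - s) ^ α * g s) hu j1
    (fun s _ => by simp only [sub_sub_cancel, hsymm]; ring)
  have j4 := reflect_Ioo (G := fun s => s ^ (β - δ) * (u - s) ^ (α + δ) * g s) hu j3
    (fun s _ => by simp only [sub_sub_cancel, hsymm]; ring)
  have k1 := (j1.add j2.1).const_mul (Real.Gamma (α + 1) * Real.Gamma (β + 1))⁻¹
  have k2 := (j3.add j4.1).const_mul (Real.Gamma (α + δ + 1) * Real.Gamma (β - δ + 1))⁻¹
  have hHg : ∀ s, betaDiff u α β δ s * g s = (Real.Gamma (α + 1) * Real.Gamma (β + 1))⁻¹ *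
      (s ^ α * (u - s) ^ β * g s + s ^ β * (u - s) ^ α * g s) -
      (Real.Gamma (α + δ + 1) * Real.Gamma (β - δ + 1))⁻¹ *
      (s ^ (α + δ) * (u - s) ^ (β - δ) * g s + s ^ (β - δ) * (u - s) ^ (α + δ) * g s) := by
    intro s; rw [betaDiff]; ring
  have hHgint : IntegrableOn (fun s => betaDiff u α β δ s * g s) (Ioo 0 u) := by
    simp only [hHg]
    exact k1.sub k2
  have hHgval : ∫ s in Ioo 0 u, betaDiff u α β δ s * g s =
      2 * ((Real.Gamma (α + 1) * Real.Gamma (β + 1))⁻¹ *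
          (∫ s in Ioo 0 u, s ^ α * (u - s) ^ β * g s) -
        (Real.Gamma (α + δ + 1) * Real.Gamma (β - δ + 1))⁻¹ *
          ∫ s in Ioo 0 u, s ^ (α + δ) * (u - s) ^ (β - δ) * g s) := by
    simp only [hHg]
    refine (integral_sub k1 k2).trans ?_
    simp only [Pi.add_apply]
    rw [integral_const_mul, integral_const_mul, integral_add j1 j2.1, integral_add j3 j4.1,
      j2.2, j4.2]
    ring
  have hform : ∀ s, betaDiff u α β δ s * (σ * (g s - g t)) =
      σ * (betaDiff u α β δ s * g s) - σ * g t * betaDiff u α β δ s := fun s => by ring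
  have hfin := setIntegral_Ioo_pos (F := fun s => betaDiff u α β δ s * (σ * (g s - g t))) hu
    (by simp only [hform]; exact (hHgint.const_mul _).sub (hHint.const_mul _)) hnonneg hpos
  simp only [hform] at hfin
  rw [integral_sub (hHgint.const_mul _) (hHint.const_mul _), integral_const_mul,
    integral_const_mul, hH0, hHgval] at hfin
  rw [div_eq_inv_mul, div_eq_inv_mul]
  linarith

/-! ### Concavity and convexity of `log (s ^ θ / (1 + e ^ (-s)))` -/

/-- `log (s ^ θ / (1 + e ^ (-s)))`, whose concavity or convexity decides the sign. -/
noncomputable def ell (θ s : ℝ) : ℝ := θ * Real.log s - Real.log (1 + Real.exp (-s))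

lemma hasDerivAt_ell (θ : ℝ) {s : ℝ} (hs : 0 < s) :
    HasDerivAt (ell θ) (θ * s⁻¹ + (Real.exp s + 1)⁻¹) s := by
  have h1 : HasDerivAt (fun s : ℝ => 1 + Real.exp (-s)) (-Real.exp (-s)) s := by
    simpa using ((hasDerivAt_neg s).exp).const_add 1
  have h2 := ((Real.hasDerivAt_log hs.ne').const_mul θ).sub
    (h1.log (by positivity))
  refine h2.congr_deriv ?_
  rw [Real.exp_neg]
  have := Real.exp_pos s
  field_simp
  ring

lemma continuousOn_ell (θ : ℝ) : ContinuousOn (ell θ) (Ioi 0) := fun _ hs =>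
  (hasDerivAt_ell θ hs).continuousAt.continuousWithinAt

lemma ell_strictConcave {θ : ℝ} (hθ : 0 ≤ θ) : StrictConcaveOn ℝ (Ioi 0) (ell θ) := by
  refine StrictAntiOn.strictConcaveOn_of_deriv (convex_Ioi 0) (continuousOn_ell θ) ?_
  rw [interior_Ioi]
  intro s hs t ht hst
  rw [(hasDerivAt_ell θ hs).deriv, (hasDerivAt_ell θ ht).deriv]
  have h1 : t⁻¹ ≤ s⁻¹ := inv_anti₀ hs hst.le
  have h2 : (Real.exp t + 1)⁻¹ < (Real.exp s + 1)⁻¹ :=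
    inv_strictAnti₀ (by positivity) (by linarith [Real.exp_lt_exp.2 hst])
  have := mul_le_mul_of_nonneg_left h1 hθ
  linarith

/-- The graph of `cosh` lies strictly above its tangent at `y`. -/
lemma cosh_tangent {x y : ℝ} (h : x ≠ y) : cosh y + sinh y * (x - y) < cosh x := by
  have e1 := Real.add_one_lt_exp (sub_ne_zero.2 h)
  have e2 := Real.add_one_lt_exp (x := -(x - y)) (neg_ne_zero.2 (sub_ne_zero.2 h))
  have f1 : Real.exp x = Real.exp y * Real.exp (x - y) := by rw [← Real.exp_add]; congr 1; ring
  have f2 : Real.exp (-x) = Real.exp (-y) * Real.exp (-(x - y)) := by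
    rw [← Real.exp_add]; congr 1; ring
  rw [cosh_eq, cosh_eq, sinh_eq, f1, f2]
  have := mul_lt_mul_of_pos_left e1 (Real.exp_pos y)
  have := mul_lt_mul_of_pos_left e2 (Real.exp_pos (-y))
  linarith

/-- `s ↦ s² eˢ / (eˢ + 1)² = (s / (2 cosh (s / 2)))²` has its strict maximum at `t0`. The
equation for `t0` reads `t0 tanh (t0 / 2) = 2`, and the bound is then that the tangent of `cosh`
at `t0 / 2`, which passes through the origin, lies below the graph. -/
lemma max_at_t0 {t0 : ℝ} (ht0pos : 0 < t0)
    (ht0 : t0 * Real.exp t0 - 2 * Real.exp t0 - t0 - 2 = 0) {s : ℝ} (hs : 0 < s) (hne : s ≠ t0) :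
    s ^ 2 * Real.exp s / (Real.exp s + 1) ^ 2 < t0 ^ 2 * Real.exp t0 / (Real.exp t0 + 1) ^ 2 := by
  have hform : ∀ r : ℝ, r ^ 2 * Real.exp r / (Real.exp r + 1) ^ 2 =
      (r / cosh (r / 2)) ^ 2 / 4 := by
    intro r
    have e1 : Real.exp r = Real.exp (r / 2) ^ 2 := by rw [← Real.exp_nat_mul]; congr 1; ring
    rw [cosh_eq, Real.exp_neg, e1]
    have := Real.exp_pos (r / 2)
    field_simp
    ring
  have htanh : t0 * sinh (t0 / 2) = 2 * cosh (t0 / 2) := by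
    have e1 : Real.exp t0 = Real.exp (t0 / 2) ^ 2 := by rw [← Real.exp_nat_mul]; congr 1; ring
    rw [cosh_eq, sinh_eq, Real.exp_neg]
    rw [e1] at ht0
    have := Real.exp_pos (t0 / 2)
    field_simp
    linarith
  have htan := cosh_tangent (x := s / 2) (y := t0 / 2) (fun h => hne (by linarith))
  have hlt : s * cosh (t0 / 2) < t0 * cosh (s / 2) := by
    have := mul_lt_mul_of_pos_left htan ht0pos
    nlinarith
  rw [hform, hform]
  have hcs := cosh_pos (s / 2)
  have hct := cosh_pos (t0 / 2)
  have : s / cosh (s / 2) < t0 / cosh (t0 / 2) := by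
    rw [div_lt_div_iff₀ hcs hct]; exact hlt
  have h0 : 0 ≤ s / cosh (s / 2) := by positivity
  have := pow_lt_pow_left₀ this h0 two_ne_zero
  linarith

/-- By `max_at_t0` the second derivative of `ell θ` is positive except possibly at `t0`, so the
derivative is strictly increasing on both sides of `t0`, hence throughout. -/
lemma ell_strictConvex {t0 : ℝ} (ht0pos : 0 < t0)
    (ht0 : t0 * Real.exp t0 - 2 * Real.exp t0 - t0 - 2 = 0) {θ : ℝ}
    (hθ : θ ≤ -(t0 ^ 2 * Real.exp t0) / (Real.exp t0 + 1) ^ 2) :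
    StrictConvexOn ℝ (Ioi 0) (ell θ) := by
  have hd : ∀ s : ℝ, 0 < s → HasDerivAt (fun s => θ * s⁻¹ + (Real.exp s + 1)⁻¹)
      (θ * (-(s ^ 2)⁻¹) + -Real.exp s / (Real.exp s + 1) ^ 2) s := by
    intro s hs
    exact ((hasDerivAt_inv hs.ne').const_mul θ).add
      (((Real.hasDerivAt_exp s).add_const 1).inv (by positivity))
  have hpos : ∀ s : ℝ, 0 < s → s ≠ t0 → 0 < deriv (fun s => θ * s⁻¹ + (Real.exp s + 1)⁻¹) s := by
    intro s hs hne
    rw [(hd s hs).deriv]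
    have h1 := max_at_t0 ht0pos ht0 hs hne
    rw [neg_div] at hθ
    have h2 : s ^ 2 * Real.exp s / (Real.exp s + 1) ^ 2 < -θ := by linarith
    have h3 : θ * (-(s ^ 2)⁻¹) + -Real.exp s / (Real.exp s + 1) ^ 2 =
        (-θ - s ^ 2 * Real.exp s / (Real.exp s + 1) ^ 2) / s ^ 2 := by
      field_simp
      ring
    rw [h3]
    exact div_pos (by linarith) (by positivity)
  have hcont : ContinuousOn (fun s => θ * s⁻¹ + (Real.exp s + 1)⁻¹) (Ioi 0) := fun s hs =>
    (hd s hs).continuousAt.continuousWithinAt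
  have hmono : StrictMonoOn (fun s => θ * s⁻¹ + (Real.exp s + 1)⁻¹) (Ioi 0) := by
    have m1 : StrictMonoOn (fun s => θ * s⁻¹ + (Real.exp s + 1)⁻¹) (Ioc 0 t0) := by
      refine strictMonoOn_of_deriv_pos (convex_Ioc 0 t0)
        (hcont.mono fun s hs => hs.1) fun s hs => ?_
      rw [interior_Ioc] at hs
      exact hpos s hs.1 hs.2.ne
    have m2 : StrictMonoOn (fun s => θ * s⁻¹ + (Real.exp s + 1)⁻¹) (Ici t0) := by
      refine strictMonoOn_of_deriv_pos (convex_Ici t0)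
        (hcont.mono fun s hs => lt_of_lt_of_le ht0pos hs) fun s hs => ?_
      rw [interior_Ici] at hs
      exact hpos s (ht0pos.trans hs) (ne_of_gt hs)
    have := m1.union m2 (isGreatest_Ioc ht0pos) isLeast_Ici
    rwa [Ioc_union_Ici_eq_Ioi ht0pos] at this
  refine StrictMonoOn.strictConvexOn_of_deriv (convex_Ioi 0) (continuousOn_ell θ) ?_
  rw [interior_Ioi]
  intro s hs t ht hst
  rw [(hasDerivAt_ell θ hs).deriv, (hasDerivAt_ell θ ht).deriv]
  exact hmono hs ht hst

/-- A strictly concave `f` makes `s ↦ f s + f (u - s)` increase up to the midpoint. -/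
lemma add_reflect_lt {f : ℝ → ℝ} (hf : StrictConcaveOn ℝ (Ioi 0) f) {u s s' : ℝ} (hs : 0 < s)
    (hss : s < s') (hu : s' ≤ u / 2) : f s + f (u - s) < f s' + f (u - s') := by
  -- the two inner points are convex combinations of the outer points `s` and `u - s`, with weights
  -- `a, b` and `b, a`
  have hD : 0 < u - 2 * s := by linarith
  have hD' := hD.ne'
  set a := (u - s - s') / (u - 2 * s) with ha
  set b := (s' - s) / (u - 2 * s) with hb
  have ha0 : 0 < a := div_pos (by linarith) hD
  have hb0 : 0 < b := div_pos (by linarith) hD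
  have haD : a * (u - 2 * s) = u - s - s' := div_mul_cancel₀ _ hD'
  have hbD : b * (u - 2 * s) = s' - s := div_mul_cancel₀ _ hD'
  have hab : a + b = 1 := mul_right_cancel₀ hD' (by linear_combination haD + hbD)
  have hm : s ∈ Ioi (0 : ℝ) := hs
  have hm' : u - s ∈ Ioi (0 : ℝ) := by simp; linarith
  have hne : s ≠ u - s := by intro h; linarith
  have e1 : a • s + b • (u - s) = s' := by
    simp only [smul_eq_mul]; linear_combination s * hab + hbD
  have e2 : b • s + a • (u - s) = u - s' := by
    simp only [smul_eq_mul]; linear_combination s * hab + haD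
  have h1 := hf.2 hm hm' hne ha0 hb0 hab
  have h2 := hf.2 hm hm' hne hb0 ha0 (by linarith)
  rw [e1] at h1
  rw [e2] at h2
  simp only [smul_eq_mul] at h1 h2
  have : (a + b) * (f s + f (u - s)) < f s' + f (u - s') := by linarith
  rwa [hab, one_mul] at this

/-! ### Products of two Nielsen beta functions -/

lemma integrableOn_nbeta {p x : ℝ} (hp : -1 < p) (hx : 0 < x) :
    IntegrableOn (fun t => t ^ p * Real.exp (-x * t) / (1 + Real.exp (-t))) (Ioi 0) := by
  have h := integrableOn_rpow_mul_exp_neg_mul_rpow hp one_pos hx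
  simp only [Real.rpow_one] at h
  refine Integrable.mono' h (Measurable.aestronglyMeasurable (by fun_prop)) ?_
  filter_upwards [ae_restrict_mem measurableSet_Ioi] with t ht
  have ht' : (0 : ℝ) < t := ht
  rw [Real.norm_of_nonneg (by positivity)]
  exact div_le_self (by positivity) (by linarith [Real.exp_pos (-t)])

lemma posCM_nbeta {p : ℝ} (hp : -1 < p) : PosCM (nbeta p) := by
  have e : ∀ x u : ℝ, Real.exp (-x * u) * (u ^ p / (1 + Real.exp (-u))) =
      u ^ p * Real.exp (-x * u) / (1 + Real.exp (-u)) := fun x u => by ring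
  refine posCM_of_laplace (k := fun t => t ^ p / (1 + Real.exp (-t)))
    (fun u hu => by positivity) (fun x hx => ?_) (fun x hx => ?_)
  · simp only [e]; exact integrableOn_nbeta hp hx
  · simp only [e]; rfl

/-- The convolution on `(0, u)` whose Laplace transform is `β_a β_b`. -/
noncomputable def betaConv (a b u : ℝ) : ℝ :=
  ∫ s in Ioo 0 u, s ^ a / (1 + Real.exp (-s)) * ((u - s) ^ b / (1 + Real.exp (-(u - s))))

lemma laplace_betaConv {a b x : ℝ} (ha : -1 < a) (hb : -1 < b) (hx : 0 < x) :
    IntegrableOn (fun u => Real.exp (-x * u) * betaConv a b u) (Ioi 0) ∧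
    ∫ u in Ioi (0 : ℝ), Real.exp (-x * u) * betaConv a b u = nbeta a x * nbeta b x := by
  have ia := integrableOn_nbeta ha hx
  have ib := integrableOn_nbeta hb hx
  set L := ContinuousLinearMap.mul ℝ ℝ
  have e : ∀ u ∈ Ioi (0 : ℝ), Real.exp (-x * u) * betaConv a b u =
      ∫ s in (0)..u, L (s ^ a * Real.exp (-x * s) / (1 + Real.exp (-s)))
        ((u - s) ^ b * Real.exp (-x * (u - s)) / (1 + Real.exp (-(u - s)))) := by
    intro u hu
    rw [intervalIntegral.integral_of_le (le_of_lt hu), integral_Ioc_eq_integral_Ioo, betaConv,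
      ← integral_const_mul]
    refine setIntegral_congr_fun measurableSet_Ioo fun s _ => ?_
    have : Real.exp (-x * u) = Real.exp (-x * s) * Real.exp (-x * (u - s)) := by
      rw [← Real.exp_add]; congr 1; ring
    simp only [L, ContinuousLinearMap.mul_apply', this]
    ring
  constructor
  · have h := (integrable_posConvolution ia ib L).integrableOn (s := Ioi 0)
    refine h.congr_fun (fun u hu => ?_) measurableSet_Ioi
    rw [e u hu, posConvolution, indicator_of_mem hu]
  · rw [setIntegral_congr_fun measurableSet_Ioi e, integral_posConvolution ia ib L]
    rfl

lemma exp_ell {θ s : ℝ} (hs : 0 < s) : Real.exp (ell θ s) = s ^ θ / (1 + Real.exp (-s)) := by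
  rw [ell, Real.exp_sub, Real.exp_log (by positivity), mul_comm, ← Real.rpow_def_of_pos hs]

lemma betaConv_integrand {a b θ u s : ℝ} (hs : s ∈ Ioo 0 u) :
    s ^ (a - θ) * (u - s) ^ (b - θ) * Real.exp (ell θ s + ell θ (u - s)) =
    s ^ a / (1 + Real.exp (-s)) * ((u - s) ^ b / (1 + Real.exp (-(u - s)))) := by
  have h2 : 0 < u - s := by linarith [hs.2]
  rw [Real.exp_add, exp_ell hs.1, exp_ell h2]
  have e1 : s ^ a = s ^ (a - θ) * s ^ θ := by rw [← Real.rpow_add hs.1]; congr 1; ring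
  have e2 : (u - s) ^ b = (u - s) ^ (b - θ) * (u - s) ^ θ := by
    rw [← Real.rpow_add h2]; congr 1; ring
  rw [e1, e2]
  ring

/-- Shifting both exponents by `θ` moves the factor `s ^ θ (u - s) ^ θ` of the Beta density into
the symmetric weight. -/
lemma betaConv_theta {a b u : ℝ} (θ : ℝ) (ha : -1 < a) (hb : -1 < b) (hu : 0 < u) :
    IntegrableOn (fun s => s ^ (a - θ) * (u - s) ^ (b - θ) *
      Real.exp (ell θ s + ell θ (u - s))) (Ioo 0 u) ∧
    ∫ s in Ioo 0 u, s ^ (a - θ) * (u - s) ^ (b - θ) * Real.exp (ell θ s + ell θ (u - s)) =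
      betaConv a b u := by
  refine ⟨?_, setIntegral_congr_fun measurableSet_Ioo fun s hs => betaConv_integrand hs⟩
  have h : IntegrableOn (fun s : ℝ => s ^ a / (1 + Real.exp (-s)) *
      ((u - s) ^ b / (1 + Real.exp (-(u - s))))) (Ioo 0 u) := by
    refine Integrable.mono' (beta_Ioo ha hb hu).1 (Measurable.aestronglyMeasurable (by fun_prop)) ?_
    filter_upwards [ae_restrict_mem measurableSet_Ioo] with s hs
    have h1 : 0 < s := hs.1
    have h2 : 0 < u - s := by linarith [hs.2]
    rw [Real.norm_of_nonneg (by positivity)]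
    gcongr
    · exact div_le_self (by positivity) (by linarith [Real.exp_pos (-s)])
    · exact div_le_self (by positivity) (by linarith [Real.exp_pos (-(u - s))])
  exact h.congr_fun (fun s hs => (betaConv_integrand hs).symm) measurableSet_Ioo

/-- Two factors and a single transfer of mass `δ`. The sign of `σ` is that of the monotonicity of
`s ↦ exp (ell θ s + ell θ (u - s))` on `(0, u / 2]`. -/
lemma posCM_step {θ σ a b δ : ℝ}
    (hg : ∀ u s s', 0 < s → s < s' → s' ≤ u / 2 →
      0 < σ * (Real.exp (ell θ s' + ell θ (u - s')) - Real.exp (ell θ s + ell θ (u - s))))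
    (hba : b ≤ a) (hδ : 0 < δ) (h1 : -1 < b - δ) (h2 : θ - 1 < b - δ) :
    PosCM (fun x => σ * (nbeta a x / Real.Gamma (a - θ + 1) *
        (nbeta b x / Real.Gamma (b - θ + 1)) -
      nbeta (a + δ) x / Real.Gamma (a + δ - θ + 1) *
        (nbeta (b - δ) x / Real.Gamma (b - δ - θ + 1)))) := by
  have ha : -1 < a := by linarith
  have hb : -1 < b := by linarith
  have haδ : -1 < a + δ := by linarith
  refine posCM_of_laplace (k := fun u => σ * (betaConv a b u /
      (Real.Gamma (a - θ + 1) * Real.Gamma (b - θ + 1)) - betaConv (a + δ) (b - δ) u /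
      (Real.Gamma (a + δ - θ + 1) * Real.Gamma (b - δ - θ + 1)))) (fun u hu => ?_) ?_ ?_
  · have c1 := betaConv_theta θ ha hb hu
    have c2 := betaConv_theta θ haδ h1 hu
    have ea : a + δ - θ = a - θ + δ := by ring
    have eb : b - δ - θ = b - θ - δ := by ring
    rw [ea, eb] at c2
    have := beta_compare (σ := σ) (α := a - θ) (β := b - θ) hu (by linarith) hδ (by linarith)
      (fun s => Real.exp (ell θ s + ell θ (u - s)))
      (fun s => by simp only [sub_sub_cancel]; rw [add_comm]) (hg u) c1.1 c2.1
    rwa [c1.2, c2.2, ← ea, ← eb] at this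
  all_goals
    intro x hx
    have l1 := laplace_betaConv ha hb hx
    have l2 := laplace_betaConv haδ h1 hx
    have e : ∀ u, Real.exp (-x * u) * (σ * (betaConv a b u /
      (Real.Gamma (a - θ + 1) * Real.Gamma (b - θ + 1)) - betaConv (a + δ) (b - δ) u /
      (Real.Gamma (a + δ - θ + 1) * Real.Gamma (b - δ - θ + 1)))) =
      σ / (Real.Gamma (a - θ + 1) * Real.Gamma (b - θ + 1)) *
        (Real.exp (-x * u) * betaConv a b u) -
      σ / (Real.Gamma (a + δ - θ + 1) * Real.Gamma (b - δ - θ + 1)) *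
        (Real.exp (-x * u) * betaConv (a + δ) (b - δ) u) := fun u => by ring
    simp only [e]
  · exact (l1.1.const_mul _).sub (l2.1.const_mul _)
  · rw [integral_sub (l1.1.const_mul _) (l2.1.const_mul _), integral_const_mul,
      integral_const_mul, l1.2, l2.2]
    field_simp

/-! ### Asymptotics of `β_p` at `0` and `∞` -/

/-- After the substitution `t = s / x` the asymptotics of `β_p` at `0` and at `∞` only depend on
the limit `c` of `e ^ (-s / x)`, which is `0` and `1` respectively. -/
lemma tendsto_nbeta {l : Filter ℝ} [l.IsCountablyGenerated] {c p : ℝ} (hc : 0 ≤ c) (hp : -1 < p)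
    (hl : ∀ᶠ x in l, 0 < x)
    (he : ∀ s : ℝ, 0 < s → Tendsto (fun x => Real.exp (-(s / x))) l (nhds c)) :
    Tendsto (fun x => x ^ (p + 1) * nbeta p x) l (nhds (Real.Gamma (p + 1) / (1 + c))) := by
  have hform : ∀ x : ℝ, 0 < x → x ^ (p + 1) * nbeta p x =
      ∫ s in Ioi (0 : ℝ), s ^ p * Real.exp (-s) / (1 + Real.exp (-(s / x))) := by
    intro x hx
    have h := integral_comp_mul_left_Ioi
      (fun s : ℝ => s ^ p * Real.exp (-s) / (1 + Real.exp (-(s / x)))) 0 hx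
    rw [mul_zero, smul_eq_mul] at h
    rw [Real.rpow_add_one hx.ne', eq_comm, ← mul_right_inj' (inv_ne_zero hx.ne'), ← h, nbeta]
    rw [show x⁻¹ * (x ^ p * x * ∫ t in Ioi (0 : ℝ), t ^ p * Real.exp (-x * t) /
      (1 + Real.exp (-t))) = x ^ p * ∫ t in Ioi (0 : ℝ), t ^ p * Real.exp (-x * t) /
      (1 + Real.exp (-t)) by field_simp, ← integral_const_mul]
    refine setIntegral_congr_fun measurableSet_Ioi fun t ht => ?_
    rw [Real.mul_rpow hx.le (le_of_lt ht), mul_div_cancel_left₀ _ hx.ne', neg_mul]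
    ring
  have hG : ∫ s in Ioi (0 : ℝ), s ^ p * Real.exp (-s) / (1 + c) =
      Real.Gamma (p + 1) / (1 + c) := by
    rw [integral_div, Real.Gamma_eq_integral (by linarith)]
    congr 1
    refine setIntegral_congr_fun measurableSet_Ioi fun t _ => ?_
    simp only [add_sub_cancel_right]; ring
  have hbound : IntegrableOn (fun s : ℝ => s ^ p * Real.exp (-s)) (Ioi 0) := by
    have h := integrableOn_rpow_mul_exp_neg_mul_rpow hp one_pos one_pos
    simpa only [Real.rpow_one, neg_mul, one_mul] using h
  rw [← hG]
  refine Tendsto.congr' (hl.mono fun x hx => (hform x hx).symm) ?_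
  refine tendsto_integral_filter_of_dominated_convergence _
    (Eventually.of_forall fun x => Measurable.aestronglyMeasurable (by fun_prop))
    (Eventually.of_forall fun x => ?_) hbound ?_
  · filter_upwards [ae_restrict_mem measurableSet_Ioi] with s hs
    have hs' : (0 : ℝ) < s := hs
    rw [Real.norm_of_nonneg (by positivity)]
    exact div_le_self (by positivity) (by linarith [Real.exp_pos (-(s / x))])
  · filter_upwards [ae_restrict_mem measurableSet_Ioi] with s hs
    exact tendsto_const_nhds.div ((he s hs).const_add 1) (by positivity)

lemma tendsto_ratio {n : ℕ} {p q : Fin n → ℝ} (hp : ∀ j, -1 < p j) (hq : ∀ j, -1 < q j)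
    (hsum : ∑ j, p j = ∑ j, q j) {l : Filter ℝ} [l.IsCountablyGenerated] {c : ℝ} (hc : 0 ≤ c)
    (hl : ∀ᶠ x in l, 0 < x)
    (he : ∀ s : ℝ, 0 < s → Tendsto (fun x => Real.exp (-(s / x))) l (nhds c)) :
    Tendsto (fun x => ∏ j, nbeta (p j) x / nbeta (q j) x) l
      (nhds (∏ j, Real.Gamma (p j + 1) / Real.Gamma (q j + 1))) := by
  have hc1 : 0 < 1 + c := by linarith
  have hg : ∀ j, 0 < Real.Gamma (q j + 1) := fun j =>
    Real.Gamma_pos_of_pos (by linarith [hq j])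
  have h : Tendsto (fun x => ∏ j, (x ^ (p j + 1) * nbeta (p j) x) /
      (x ^ (q j + 1) * nbeta (q j) x)) l
      (nhds (∏ j, (Real.Gamma (p j + 1) / (1 + c)) / (Real.Gamma (q j + 1) / (1 + c)))) :=
    tendsto_finsetProd _ fun j _ => (tendsto_nbeta hc (hp j) hl he).div
      (tendsto_nbeta hc (hq j) hl he) (div_pos (hg j) hc1).ne'
  have e : ∀ j, (Real.Gamma (p j + 1) / (1 + c)) / (Real.Gamma (q j + 1) / (1 + c)) =
      Real.Gamma (p j + 1) / Real.Gamma (q j + 1) := fun j =>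
    div_div_div_cancel_right₀ hc1.ne' _ _
  simp only [e] at h
  refine h.congr' (hl.mono fun x hx => ?_)
  have hx1 : ∏ j, x ^ (p j + 1) = ∏ j, x ^ (q j + 1) := by
    rw [← Real.rpow_sum_of_pos hx, ← Real.rpow_sum_of_pos hx, Finset.sum_add_distrib,
      Finset.sum_add_distrib, hsum]
  have hx2 : 0 < ∏ j, x ^ (q j + 1) := Finset.prod_pos fun j _ => by positivity
  rw [Finset.prod_div_distrib, Finset.prod_mul_distrib, Finset.prod_mul_distrib, hx1,
    mul_div_mul_left _ _ hx2.ne']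
  exact (Finset.prod_div_distrib _ _).symm

/-! ### Products of several Nielsen beta functions -/

/-- `posCM_of_transfer` is applied to `β_r / Γ(r - θ + 1)`, `r > max (-1) (θ - 1)`: with this
normalisation the quotient of Gamma factors disappears from the difference of products. -/
lemma posCM_of_majorizes {n : ℕ} {p q : Fin n → ℝ} (hq : ∀ j, -1 < q j) (hmaj : Majorizes p q)
    {θ σ : ℝ} (hpθ : ∀ j, 0 < p j - θ + 1) (hqθ : ∀ j, 0 < q j - θ + 1)
    (hg : ∀ u s s', 0 < s → s < s' → s' ≤ u / 2 →
      0 < σ * (Real.exp (ell θ s' + ell θ (u - s')) - Real.exp (ell θ s + ell θ (u - s)))) :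
    PosCM (fun x => σ * (∏ j, nbeta (p j) x -
      (∏ j, Real.Gamma (p j - θ + 1) / Real.Gamma (q j - θ + 1)) * ∏ j, nbeta (q j) x)) := by
  obtain ⟨hps, -, hpart, hsum, hne⟩ := hmaj
  have h := posCM_of_transfer (max (-1) (θ - 1)) σ
    (fun r x => nbeta r x / Real.Gamma (r - θ + 1))
    (fun r hr => by
      have hr1 := (max_lt_iff.1 hr).1
      have hr2 := (max_lt_iff.1 hr).2
      have hG := Real.Gamma_pos_of_pos (show 0 < r - θ + 1 by linarith)
      exact ((posCM_nbeta hr1).mul (PosCM.const (inv_pos.2 hG))).congr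
        fun x _ => div_eq_mul_inv _ _)
    (fun a b δ hba hδ hm => posCM_step hg hba hδ (max_lt_iff.1 hm).1 (max_lt_iff.1 hm).2)
    p hps _ q rfl (fun j => max_lt (hq j) (by linarith [hqθ j])) hpart hsum hne
  have hP : 0 < ∏ j, Real.Gamma (p j - θ + 1) :=
    Finset.prod_pos fun j _ => Real.Gamma_pos_of_pos (hpθ j)
  have hQ : 0 < ∏ j, Real.Gamma (q j - θ + 1) :=
    Finset.prod_pos fun j _ => Real.Gamma_pos_of_pos (hqθ j)
  refine ((PosCM.const hP).mul h).congr fun x _ => ?_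
  simp only [Finset.prod_div_distrib]
  field_simp

theorem stmt11 (n : ℕ) (hn : 2 ≤ n) (p q : Fin n → ℝ)
    (hp : ∀ j, -1 < p j) (hq : ∀ j, -1 < q j) (hmaj : Majorizes p q)
    (t0 : ℝ) (ht0pos : 0 < t0)
    (ht0 : t0 * Real.exp t0 - 2 * Real.exp t0 - t0 - 2 = 0)
    (hut0 : ∀ t : ℝ, 0 < t → t * Real.exp t - 2 * Real.exp t - t - 2 = 0 → t = t0)
    (θ0 : ℝ) (hθ0 : θ0 = -(t0 ^ 2 * Real.exp t0) / (Real.exp t0 + 1) ^ 2) :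
    (∀ θ : ℝ, 0 ≤ θ → θ < 1 + min (p ⟨n - 1, by omega⟩) (q ⟨n - 1, by omega⟩) →
      CompletelyMonotonicOn (fun x =>
        ∏ j, nbeta (p j) x -
          (∏ j, Real.Gamma (p j - θ + 1) / Real.Gamma (q j - θ + 1)) * ∏ j, nbeta (q j) x)) ∧
    (∀ θ : ℝ, θ ≤ θ0 →
      CompletelyMonotonicOn (fun x =>
        (∏ j, Real.Gamma (p j - θ + 1) / Real.Gamma (q j - θ + 1)) * ∏ j, nbeta (q j) x -
          ∏ j, nbeta (p j) x)) ∧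
    (∀ x : ℝ, 0 < x →
      (∏ j, Real.Gamma (p j + 1) / Real.Gamma (q j + 1)) < ∏ j, nbeta (p j) x / nbeta (q j) x ∧
      ∏ j, nbeta (p j) x / nbeta (q j) x <
        ∏ j, Real.Gamma (p j - θ0 + 1) / Real.Gamma (q j - θ0 + 1)) ∧
    Tendsto (fun x => ∏ j, nbeta (p j) x / nbeta (q j) x) (nhdsWithin 0 (Set.Ioi 0))
      (nhds (∏ j, Real.Gamma (p j + 1) / Real.Gamma (q j + 1))) ∧
    Tendsto (fun x => ∏ j, nbeta (p j) x / nbeta (q j) x) atTop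
      (nhds (∏ j, Real.Gamma (p j + 1) / Real.Gamma (q j + 1))) := by
  -- the minimum of both sorted tuples is attained at the last index
  have hlast : ∀ j : Fin n, j ≤ ⟨n - 1, by omega⟩ := fun j => by
    rw [Fin.le_def]; simp only; omega
  have hθ0neg : θ0 ≤ 0 := by
    rw [hθ0, neg_div]
    exact neg_nonpos.2 (by positivity)
  have hI : ∀ θ : ℝ, 0 ≤ θ → θ < 1 + min (p ⟨n - 1, by omega⟩) (q ⟨n - 1, by omega⟩) →
      PosCM (fun x => ∏ j, nbeta (p j) x -
        (∏ j, Real.Gamma (p j - θ + 1) / Real.Gamma (q j - θ + 1)) * ∏ j, nbeta (q j) x) := by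
    intro θ h0 h1
    have hmp := min_le_left (p ⟨n - 1, by omega⟩) (q ⟨n - 1, by omega⟩)
    have hmq := min_le_right (p ⟨n - 1, by omega⟩) (q ⟨n - 1, by omega⟩)
    refine (posCM_of_majorizes (θ := θ) (σ := 1) hq hmaj
      (fun j => by linarith [hmaj.1 _ _ (hlast j)])
      (fun j => by linarith [hmaj.2.1 _ _ (hlast j)]) fun u s s' hs hss hu => ?_).congr
      fun x _ => (one_mul _).symm
    have := Real.exp_lt_exp.2 (add_reflect_lt (ell_strictConcave h0) hs hss hu)
    linarith
  have hII : ∀ θ : ℝ, θ ≤ θ0 → PosCM (fun x =>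
        (∏ j, Real.Gamma (p j - θ + 1) / Real.Gamma (q j - θ + 1)) * ∏ j, nbeta (q j) x -
          ∏ j, nbeta (p j) x) := by
    intro θ h
    refine (posCM_of_majorizes (θ := θ) (σ := -1) hq hmaj
      (fun j => by linarith [hp j]) (fun j => by linarith [hq j])
      fun u s s' hs hss hu => ?_).congr fun x _ => by ring
    have := add_reflect_lt (ell_strictConvex ht0pos ht0 (hθ0 ▸ h)).neg hs hss hu
    simp only [Pi.neg_apply] at this
    have := Real.exp_lt_exp.2
      (show ell θ s' + ell θ (u - s') < ell θ s + ell θ (u - s) by linarith)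
    linarith
  refine ⟨fun θ h0 h1 => (hI θ h0 h1).1, fun θ h => (hII θ h).1, fun x hx => ?_, ?_, ?_⟩
  · have hQ : 0 < ∏ j, nbeta (q j) x := Finset.prod_pos fun j _ => (posCM_nbeta (hq j)).2 x hx
    have h1 := (hI 0 le_rfl (by
      have := lt_min (hp ⟨n - 1, by omega⟩) (hq ⟨n - 1, by omega⟩)
      linarith)).2 x hx
    have h2 := (hII θ0 le_rfl).2 x hx
    simp only [sub_zero] at h1
    rw [Finset.prod_div_distrib (f := fun j => nbeta (p j) x)]
    constructor
    · rw [lt_div_iff₀ hQ]; linarith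
    · rw [div_lt_iff₀ hQ]; linarith
  · refine tendsto_ratio hp hq hmaj.2.2.2.1 (c := 0) le_rfl self_mem_nhdsWithin fun s hs => ?_
    have h : Tendsto (fun x : ℝ => s / x) (nhdsWithin 0 (Set.Ioi 0)) atTop := by
      simp only [div_eq_mul_inv]
      exact tendsto_inv_nhdsGT_zero.const_mul_atTop hs
    exact Real.tendsto_exp_neg_atTop_nhds_zero.comp h
  · refine tendsto_ratio hp hq hmaj.2.2.2.1 (c := 1) zero_le_one (eventually_gt_atTop 0)
      fun s _ => ?_
    have h := (tendsto_const_nhds (x := s)).div_atTop (tendsto_id (α := ℝ) (x := atTop))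
    have h' := (Real.continuous_exp.tendsto _).comp h.neg
    simpa [Function.comp_def] using h'
end

section
/- Let a > 0, b ∈ ℝ, and for p > −a, x > 0 set U(a+p, b+p, x) via the integral representation U(α, β, x) = (1/Γ(α)) ∫₀^∞ t^{α−1} (1+t)^{β−α−1} e^{−xt} dt. Let n ≥ 2 and let p = (p₁,…,pₙ), q = (q₁,…,qₙ) ∈ (−a,∞)ⁿ satisfy p ≺ q, and let ρ ∈ ℝ. If a − b + 1 > 0, then x ↦ ρ ∏_{j=1}^n U(a+q_j, b+q_j, x) − ∏_{j=1}^n U(a+p_j, b+p_j, x) is completely monotonic on (0,∞) if and only if ρ ≥ 1; if a − b + 1 < 0, then x ↦ ∏_{j=1}^n U(a+p_j, b+p_j, x) − ρ ∏_{j=1}^n U(a+q_j, b+q_j, x) is completely monotonic on (0,∞) if and only if ρ ≤ 1. Consequently, for all x > 0, ∏_{j=1}^n U(a+p_j, b+p_j, x)/U(a+q_j, b+q_j, x) < 1 when a − b + 1 > 0, and > 1 when a − b + 1 < 0. -/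
/-!
With `c = a - b + 1`, every factor `U(a + p, b + p, ·)` is the Laplace transform of
`t ^ (a + p - 1) * (1 + t) ^ (-c) / Γ(a + p)`; the exponent `c` does not depend on `p`.

**Two factors.** The product of the factors with parameters `A`, `B` is the Laplace transform of the
convolution of the densities, whose value at `r` is
`(Γ(A) Γ(B))⁻¹ ∫₀^r t ^ (A - 1) (r - t) ^ (B - 1) (1 + r + t (r - t)) ^ (-c) dt`.
Fold the integral at `r / 2`. The symmetrized weight is, up to a factor depending only on `A + B`,
`cosh ((A - B) / 2 * log ((r - t) / t))`, so the ratio of a more spread weight to a less spread one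
is strictly decreasing on `(0, r / 2)` (`cosh_cross`), while the beta integral shows that both
normalized weights have the same mass. Since `t ↦ c (1 + r + t (r - t)) ^ (-c)` is strictly
decreasing on `(0, r / 2)` whatever the sign of `c ≠ 0`, the single-crossing principle
`crossing_integral_lt` gives `tricomiConv_spread`: spreading the parameters increases `c` times the
density. Hence `c * (U_{A'} U_{B'} - U_A U_B)` is the Laplace transform of a positive function, which
makes it completely monotonic and positive.

**Several factors.** A majorization is a finite chain of two-coordinate spreads
(`majorization_induction`), and completely monotonic functions are closed under sums and products, so
`c * (∏ U_q - ∏ U_p)` is completely monotonic and positive (`tricomiV_majorizes`). Adding a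
nonnegative multiple of `∏ U_q` gives the sufficiency of the conditions on `ρ`.

**Necessity.** As `x → ∞`, both products are asymptotic to `x ^ (-∑ (a + p_j))`, so already the
nonnegativity of the function itself forces the bound on `ρ` (`const_le_of_prod_le`).
-/

open Real MeasureTheory Set

/-- The Tricomi confluent hypergeometric function of the second kind,
`U(α, β, x) = (1/Γ(α)) ∫₀^∞ t^{α-1} (1+t)^{β-α-1} e^{-xt} dt`. -/
noncomputable def tricomiU (α β x : ℝ) : ℝ :=
  (1 / Real.Gamma α) * ∫ t in Set.Ioi (0 : ℝ), t ^ (α - 1) * (1 + t) ^ (β - α - 1) * Real.exp (-x * t)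

/-! ### Completely monotonic functions -/

lemma cm_congr {f g : ℝ → ℝ} (h : ∀ x, 0 < x → f x = g x) (hg : CompletelyMonotonicOn g) :
    CompletelyMonotonicOn f := by
  have he : Set.EqOn f g (Set.Ioi 0) := fun x hx => h x hx
  refine ⟨hg.1.congr he, fun m x hx => ?_⟩
  rw [iteratedDerivWithin_congr he hx]
  exact hg.2 m x hx

lemma cm_contDiffWithinAt {f : ℝ → ℝ} (hf : CompletelyMonotonicOn f) (m : ℕ) {x : ℝ}
    (hx : 0 < x) : ContDiffWithinAt ℝ m f (Set.Ioi 0) x :=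
  (hf.1 x hx).of_le (by exact_mod_cast le_top)

lemma cm_add {f g : ℝ → ℝ} (hf : CompletelyMonotonicOn f) (hg : CompletelyMonotonicOn g) :
    CompletelyMonotonicOn (fun x => f x + g x) := by
  refine ⟨hf.1.add hg.1, fun m x hx => ?_⟩
  rw [iteratedDerivWithin_fun_add (Set.mem_Ioi.2 hx) (uniqueDiffOn_Ioi 0) (cm_contDiffWithinAt hf m hx)
    (cm_contDiffWithinAt hg m hx), mul_add]
  exact add_nonneg (hf.2 m x hx) (hg.2 m x hx)

lemma cm_const_mul {f : ℝ → ℝ} (hf : CompletelyMonotonicOn f) {k : ℝ} (hk : 0 ≤ k) :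
    CompletelyMonotonicOn (fun x => k * f x) := by
  refine ⟨contDiffOn_const.mul hf.1, fun m x hx => ?_⟩
  rw [iteratedDerivWithin_const_mul_field]
  have := mul_nonneg hk (hf.2 m x hx)
  linarith

lemma cm_mul {f g : ℝ → ℝ} (hf : CompletelyMonotonicOn f) (hg : CompletelyMonotonicOn g) :
    CompletelyMonotonicOn (fun x => f x * g x) := by
  refine ⟨hf.1.mul hg.1, fun m x hx => ?_⟩
  have h := iteratedDerivWithin_mul (Set.mem_Ioi.2 hx) (uniqueDiffOn_Ioi 0) (cm_contDiffWithinAt hf m hx)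
    (cm_contDiffWithinAt hg m hx)
  change 0 ≤ (-1 : ℝ) ^ m * iteratedDerivWithin m (f * g) (Set.Ioi 0) x
  rw [h, Finset.mul_sum]
  refine Finset.sum_nonneg fun i hi => ?_
  have him : i ≤ m := by simpa [Nat.lt_succ_iff] using hi
  have hs : (-1 : ℝ) ^ m = (-1) ^ i * (-1) ^ (m - i) := by
    rw [← pow_add, Nat.add_sub_cancel' him]
  rw [hs]
  have := mul_nonneg (Nat.cast_nonneg (α := ℝ) (m.choose i))
    (mul_nonneg (hf.2 i x hx) (hg.2 (m - i) x hx))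
  linarith

lemma cm_one : CompletelyMonotonicOn (fun _ => 1) := by
  refine ⟨contDiffOn_const, fun m x hx => ?_⟩
  rcases m with _ | m
  · simp
  · simp [iteratedDerivWithin_const]

lemma cm_prod {ι : Type*} (s : Finset ι) {f : ι → ℝ → ℝ}
    (hf : ∀ i ∈ s, CompletelyMonotonicOn (f i)) :
    CompletelyMonotonicOn (fun x => ∏ i ∈ s, f i x) := by
  classical
  induction s using Finset.induction_on with
  | empty => simpa using cm_one
  | insert i s hi ih =>
    simp only [Finset.prod_insert hi]
    exact cm_mul (hf i (by simp)) (ih fun j hj => hf j (by simp [hj]))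

/-- The Laplace transform of a nonnegative density is completely monotonic: it is the moment
generating function of `t ↦ -t` under the measure with that density. -/
lemma cm_laplace {g : ℝ → ℝ} (hg : ∀ t, 0 < t → 0 ≤ g t)
    (hint : ∀ x, 0 < x → IntegrableOn (fun t => g t * Real.exp (-x * t)) (Set.Ioi 0)) :
    CompletelyMonotonicOn (fun x => ∫ t in Set.Ioi (0 : ℝ), g t * Real.exp (-x * t)) := by
  have hmeas : AEMeasurable g (volume.restrict (Set.Ioi 0)) := by
    have h1 := (hint 1 one_pos).aestronglyMeasurable.aemeasurable
    have h2 : AEMeasurable (fun t : ℝ => Real.exp t) (volume.restrict (Set.Ioi 0)) :=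
      Real.measurable_exp.aemeasurable
    refine (h1.mul h2).congr (Filter.Eventually.of_forall fun t => ?_)
    simp [mul_assoc, ← Real.exp_add]
  set μ : Measure ℝ := (volume.restrict (Set.Ioi 0)).withDensity (fun t => ENNReal.ofReal (g t))
    with hμ
  have hae : ∀ᵐ t ∂(volume.restrict (Set.Ioi (0:ℝ))), 0 ≤ g t :=
    (ae_restrict_iff' measurableSet_Ioi).2 (Filter.Eventually.of_forall fun t ht => hg t ht)
  have hI : ∀ F : ℝ → ℝ, ∫ t, F t ∂μ = ∫ t in Set.Ioi (0:ℝ), g t * F t := by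
    intro F
    rw [hμ, integral_withDensity_eq_integral_toReal_smul₀ hmeas.ennreal_ofReal
      (Filter.Eventually.of_forall fun t => ENNReal.ofReal_lt_top)]
    refine integral_congr_ae (hae.mono fun t ht => ?_)
    simp [ENNReal.toReal_ofReal ht]
  have hmgf : ∀ x, ProbabilityTheory.mgf (fun t => -t) μ x =
      ∫ t in Set.Ioi (0 : ℝ), g t * Real.exp (-x * t) := by
    intro x
    rw [ProbabilityTheory.mgf, hI]
    simp
  have hset : Set.Ioi 0 ⊆ interior (ProbabilityTheory.integrableExpSet (fun t => -t) μ) := by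
    refine interior_maximal (fun x hx => ?_) isOpen_Ioi
    change Integrable _ μ
    rw [hμ, integrable_withDensity_iff_integrable_smul₀' hmeas.ennreal_ofReal
      (Filter.Eventually.of_forall fun t => ENNReal.ofReal_lt_top)]
    refine (hint x hx).congr (hae.mono fun t ht => ?_)
    simp [ENNReal.toReal_ofReal ht]
  simp only [← hmgf]
  have han := (ProbabilityTheory.analyticOnNhd_mgf (X := fun t : ℝ => -t) (μ := μ)).mono hset
  refine ⟨han.contDiffOn (uniqueDiffOn_Ioi 0), fun m x hx => ?_⟩
  rw [iteratedDerivWithin_of_isOpen isOpen_Ioi hx]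
  change 0 ≤ (-1) ^ m * iteratedDeriv m (ProbabilityTheory.mgf (fun t : ℝ => -t) μ) x
  rw [ProbabilityTheory.iteratedDeriv_mgf (hset hx), hI, ← integral_const_mul]
  refine integral_nonneg_of_ae ((ae_restrict_iff' measurableSet_Ioi).2
    (Filter.Eventually.of_forall fun t ht => ?_))
  have h1 : (-1 : ℝ) ^ m * (-t) ^ m = t ^ m := by rw [← mul_pow]; simp
  have h2 : 0 ≤ g t * (t ^ m * Real.exp (x * -t)) :=
    mul_nonneg (hg t ht) (mul_nonneg (pow_nonneg (le_of_lt ht) m) (Real.exp_pos _).le)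
  calc (0:ℝ) ≤ g t * (t ^ m * Real.exp (x * -t)) := h2
    _ = _ := by rw [← h1]; ring

/-! ### Majorization as a chain of two-coordinate spreads -/

/-- Every strict majorization is a finite chain of two-coordinate spreads, so a transitive relation
that contains the spreads contains majorization. The spreads stay in `(-a, ∞)`. The induction is on the
number `N` of coordinates where `p` and `q` differ: moving the largest admissible amount `δ` from an
excess coordinate `j` of `q` to the first deficient one `k` makes `q` agree with `p` at `j` or at `k`. -/
lemma majorization_induction {n : ℕ} (a : ℝ) (R : (Fin n → ℝ) → (Fin n → ℝ) → Prop)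
    (htrans : ∀ x y z, R x y → R y z → R x z)
    (hstep : ∀ (x y : Fin n → ℝ) (j k : Fin n), j ≠ k → (∀ i, -a < x i) → (∀ i, -a < y i) →
      (∀ i, i ≠ j → i ≠ k → x i = y i) → x j + x k = y j + y k → x k ≤ x j → x j < y j → R x y)
    (p : Fin n → ℝ) (hp : ∀ i, -a < p i) (hsort : ∀ i j : Fin n, i ≤ j → p j ≤ p i) :
    ∀ (N : ℕ) (q : Fin n → ℝ), (Finset.univ.filter fun i => p i ≠ q i).card = N →
      (∀ i, -a < q i) →
      (∀ k : Fin n, ∑ j ∈ Finset.univ.filter (fun j => j ≤ k), p j ≤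
        ∑ j ∈ Finset.univ.filter (fun j => j ≤ k), q j) →
      ∑ j, p j = ∑ j, q j → p ≠ q → R p q := by
  intro N
  induction N using Nat.strong_induction_on with
  | _ N ih =>
  intro q hN hq hpart hsum hne
  have hex : ∃ k, q k < p k := by
    by_contra! h
    apply hne
    funext i
    exact (Finset.sum_eq_sum_iff_of_le (fun i _ => h i)).1 hsum i (Finset.mem_univ i)
  obtain ⟨k, hk, hkmin⟩ : ∃ k, q k < p k ∧ ∀ i, i < k → p i ≤ q i := by
    have hS : (Finset.univ.filter fun k => q k < p k).Nonempty := by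
      obtain ⟨k, hk⟩ := hex
      exact ⟨k, by simpa using hk⟩
    refine ⟨(Finset.univ.filter fun k => q k < p k).min' hS, ?_, fun i hi => ?_⟩
    · simpa using Finset.min'_mem _ hS
    · by_contra! h
      exact absurd (Finset.min'_le _ i (by simpa using h)) (not_le.2 hi)
  obtain ⟨j, hjk, hj⟩ : ∃ j, j < k ∧ p j < q j := by
    by_contra! h
    have h1 : ∑ j ∈ Finset.univ.filter (fun j => j ≤ k), q j <
        ∑ j ∈ Finset.univ.filter (fun j => j ≤ k), p j := by
      refine Finset.sum_lt_sum (fun i hi => ?_) ⟨k, by simp, hk⟩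
      rcases lt_or_eq_of_le (by simpa using hi : i ≤ k) with hi | rfl
      · exact h i hi
      · exact hk.le
    exact absurd (hpart k) (not_le.2 h1)
  set δ := min (q j - p j) (p k - q k) with hδ
  have hδ0 : 0 < δ := lt_min (by linarith) (by linarith)
  have hδ1 : δ ≤ q j - p j := min_le_left _ _
  have hδ2 : δ ≤ p k - q k := min_le_right _ _
  have hjk' : j ≠ k := hjk.ne
  set q' : Fin n → ℝ := fun i => if i = j then q j - δ else if i = k then q k + δ else q i with hq'
  have hq'j : q' j = q j - δ := by simp [hq']
  have hq'k : q' k = q k + δ := by simp [hq', hjk'.symm]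
  have hq'o : ∀ i, i ≠ j → i ≠ k → q' i = q i := fun i h1 h2 => by simp [hq', h1, h2]
  have hq'a : ∀ i, -a < q' i := by
    intro i
    by_cases h1 : i = j
    · subst h1; have := hp i; linarith
    by_cases h2 : i = k
    · subst h2; have := hq i; linarith
    rw [hq'o i h1 h2]; exact hq i
  have hstep' : R q' q := by
    refine hstep q' q j k hjk' hq'a hq hq'o (by linarith) ?_ (by linarith)
    have := hsort j k hjk.le
    linarith
  have hsum_set : ∀ s : Finset (Fin n), j ∈ s → k ∈ s → ∑ i ∈ s, q' i = ∑ i ∈ s, q i := by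
    intro s hjs hks
    have hks' : k ∈ s.erase j := Finset.mem_erase.2 ⟨hjk'.symm, hks⟩
    rw [← Finset.add_sum_erase s q' hjs, ← Finset.add_sum_erase _ q' hks',
      ← Finset.add_sum_erase s q hjs, ← Finset.add_sum_erase _ q hks', hq'j, hq'k]
    have : ∑ i ∈ (s.erase j).erase k, q' i = ∑ i ∈ (s.erase j).erase k, q i :=
      Finset.sum_congr rfl fun i hi => by
        simp only [Finset.mem_erase] at hi
        exact hq'o i hi.2.1 hi.1
    rw [this]; ring
  by_cases hpq' : p = q'
  · rw [hpq']; exact hstep'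
  refine htrans p q' q (ih _ ?_ q' rfl hq'a ?_ ?_ hpq') hstep'
  · rw [← hN]
    apply Finset.card_lt_card
    rw [Finset.ssubset_iff_of_subset]
    · rcases min_choice (q j - p j) (p k - q k) with h | h
      · refine ⟨j, by simpa using hj.ne, ?_⟩
        simp only [Finset.mem_filter, Finset.mem_univ, true_and, not_not, hq'j, hδ, h]
        ring
      · refine ⟨k, by simpa using hk.ne', ?_⟩
        simp only [Finset.mem_filter, Finset.mem_univ, true_and, not_not, hq'k, hδ, h]
        ring
    · intro i hi
      simp only [Finset.mem_filter, Finset.mem_univ, true_and] at hi ⊢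
      by_cases h1 : i = j
      · subst h1; exact hj.ne
      by_cases h2 : i = k
      · subst h2; exact hk.ne'
      rwa [hq'o i h1 h2] at hi
  · intro l
    by_cases hl : k ≤ l
    · rw [hsum_set _ (by simpa using hjk.le.trans hl) (by simpa using hl)]
      exact hpart l
    -- before position `k` the transferred vector still dominates `p` coordinatewise
    · refine Finset.sum_le_sum fun i hi => ?_
      have hik : i < k := lt_of_le_of_lt (by simpa using hi) (not_le.1 hl)
      by_cases h1 : i = j
      · subst h1; linarith
      rw [hq'o i h1 hik.ne]
      exact hkmin i hik
  · rw [hsum_set _ (Finset.mem_univ j) (Finset.mem_univ k)]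
    exact hsum

/-! ### The single-crossing principle -/

lemma cosh_cross {d d' u v : ℝ} (hd : 0 ≤ d) (hdd : d < d') (hv : 0 < v) (huv : v < u) :
    Real.cosh (d' * v) * Real.cosh (d * u) < Real.cosh (d' * u) * Real.cosh (d * v) := by
  have key : ∀ x y : ℝ, 2 * (Real.cosh x * Real.cosh y) = Real.cosh (x + y) + Real.cosh (x - y) := by
    intro x y; rw [Real.cosh_add, Real.cosh_sub]; ring
  have h1 : Real.cosh (d' * v + d * u) < Real.cosh (d' * u + d * v) := by
    rw [Real.cosh_lt_cosh]
    have e1 : 0 ≤ d' * v + d * u := by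
      have := mul_pos (hd.trans_lt hdd) hv
      have := mul_nonneg hd (hv.trans huv).le
      linarith
    rw [abs_of_nonneg e1]
    refine lt_of_lt_of_le ?_ (le_abs_self _)
    nlinarith [mul_pos (sub_pos.2 hdd) (sub_pos.2 huv)]
  have h2 : Real.cosh (d' * v - d * u) < Real.cosh (d' * u - d * v) := by
    rw [Real.cosh_lt_cosh]
    refine lt_of_lt_of_le ?_ (le_abs_self _)
    rw [abs_lt]
    constructor
    · nlinarith [mul_pos (sub_pos.2 hdd) (add_pos (hv.trans huv) hv)]
    · nlinarith [mul_pos (add_pos_of_nonneg_of_pos hd (hd.trans_lt hdd)) (sub_pos.2 huv)]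
  have := key (d' * v) (d * u)
  have := key (d' * u) (d * v)
  linarith

/-- Single-crossing principle: if `w' / w` is strictly decreasing and `w`, `w'` have the same mass,
then `w'` gives a larger integral to every strictly decreasing function. -/
lemma crossing_integral_lt {m : ℝ} (hm : 0 < m) {w w' ψ : ℝ → ℝ}
    (hw : ∀ t ∈ Set.Ioo 0 m, 0 < w t)
    (hcross : ∀ s ∈ Set.Ioo 0 m, ∀ t ∈ Set.Ioo 0 m, s < t → w' t * w s < w' s * w t)
    (hψ : StrictAntiOn ψ (Set.Ioo 0 m)) (hbdd : BddBelow (ψ '' Set.Ioo 0 m))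
    (hiw : IntegrableOn w (Set.Ioo 0 m)) (hiw' : IntegrableOn w' (Set.Ioo 0 m))
    (hiwψ : IntegrableOn (fun t => w t * ψ t) (Set.Ioo 0 m))
    (hiw'ψ : IntegrableOn (fun t => w' t * ψ t) (Set.Ioo 0 m))
    (hmass : ∫ t in Set.Ioo 0 m, w t = ∫ t in Set.Ioo 0 m, w' t) :
    ∫ t in Set.Ioo 0 m, w t * ψ t < ∫ t in Set.Ioo 0 m, w' t * ψ t := by
  -- a nonnegative function with vanishing integral vanishes at all but a null set of points
  have hnull : ∀ F : ℝ → ℝ, IntegrableOn F (Set.Ioo 0 m) → (∀ t ∈ Set.Ioo 0 m, 0 ≤ F t) →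
      ∫ t in Set.Ioo 0 m, F t ≤ 0 → volume (Set.Ioo 0 m ∩ {t | F t ≠ 0}) = 0 := by
    intro F hF hF0 hle
    have h0 : 0 ≤ᵐ[volume.restrict (Set.Ioo 0 m)] F :=
      (ae_restrict_iff' measurableSet_Ioo).2 (Filter.Eventually.of_forall hF0)
    have h1 := (integral_eq_zero_iff_of_nonneg_ae h0 hF).1
      (le_antisymm hle (integral_nonneg_of_ae h0))
    have h2 := (ae_restrict_iff' measurableSet_Ioo).1 h1
    rw [ae_iff] at h2
    refine measure_mono_null (fun t ht => ?_) h2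
    simpa [and_assoc] using ht
  have hvol : volume (Set.Ioo 0 m) ≠ 0 := by simp [hm]
  set T : Set ℝ := {t | t ∈ Set.Ioo 0 m ∧ w t ≤ w' t} with hT
  have hTne : T.Nonempty := by
    by_contra hemp
    have hlt : ∀ t ∈ Set.Ioo 0 m, w' t < w t := by
      intro t ht
      by_contra! h
      exact hemp ⟨t, ht, h⟩
    have := hnull (fun t => w t - w' t) (hiw.sub hiw') (fun t ht => (sub_pos.2 (hlt t ht)).le)
      (by rw [integral_sub hiw hiw', hmass]; simp)
    apply hvol
    exact measure_mono_null (fun t ht => Set.mem_inter ht (sub_pos.2 (hlt t ht)).ne') this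
  have hTbdd : BddBelow (ψ '' T) := hbdd.mono (Set.image_mono fun t ht => ht.1)
  -- `ψ₀` separates the values of `ψ` on the two sides of the crossing point of `w` and `w'`
  set ψ₀ := sInf (ψ '' T) with hψ₀
  have hpos : ∀ t ∈ Set.Ioo 0 m, 0 ≤ (w' t - w t) * (ψ t - ψ₀) := by
    intro t ht
    by_cases h : w t ≤ w' t
    · exact mul_nonneg (sub_nonneg.2 h) (sub_nonneg.2 (csInf_le hTbdd ⟨t, ⟨ht, h⟩, rfl⟩))
    · have hle : ψ t ≤ ψ₀ := by
        refine le_csInf (hTne.image ψ) ?_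
        rintro _ ⟨s, ⟨hs, hsw⟩, rfl⟩
        rcases lt_trichotomy s t with hst | rfl | hst
        · exact (hψ hs ht hst).le
        · exact le_rfl
        · exfalso
          have h1 := hcross t ht s hs hst
          have h2 := hw t ht
          have h3 := hw s hs
          push Not at h
          nlinarith
      push Not at h
      exact mul_nonneg_of_nonpos_of_nonpos (by linarith) (by linarith)
  by_contra! hcon
  have hexp : (fun t => (w' t - w t) * (ψ t - ψ₀)) =
      fun t => (w' t * ψ t - w t * ψ t) - ψ₀ * (w' t - w t) := by
    funext t; ring
  have hI1 : IntegrableOn (fun t => w' t * ψ t - w t * ψ t) (Set.Ioo 0 m) := hiw'ψ.sub hiwψ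
  have hI2 : IntegrableOn (fun t => ψ₀ * (w' t - w t)) (Set.Ioo 0 m) :=
    (hiw'.sub hiw).const_mul ψ₀
  have hz := hnull (fun t => (w' t - w t) * (ψ t - ψ₀)) (by rw [hexp]; exact hI1.sub hI2) hpos (by
    rw [hexp, integral_sub hI1 hI2, integral_sub hiw'ψ hiwψ, integral_const_mul,
      integral_sub hiw' hiw, hmass]
    simp; linarith)
  have hs1 : (Set.Ioo 0 m ∩ {t | w' t = w t}).Subsingleton := by
    rintro s ⟨hs, hs'⟩ t ⟨ht, ht'⟩
    simp only [Set.mem_ofPred_eq] at hs' ht'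
    rcases lt_trichotomy s t with h | h | h
    · have := hcross s hs t ht h
      rw [hs', ht'] at this; linarith
    · exact h
    · have := hcross t ht s hs h
      rw [hs', ht'] at this; linarith
  have hs2 : (Set.Ioo 0 m ∩ {t | ψ t = ψ₀}).Subsingleton := by
    rintro s ⟨hs, hs'⟩ t ⟨ht, ht'⟩
    exact hψ.injOn hs ht (hs'.trans ht'.symm)
  apply hvol
  refine measure_mono_null (t := _ ∪ (_ ∪ _)) (fun t ht => ?_)
    (measure_union_null hz (measure_union_null (hs1.measure_zero volume) (hs2.measure_zero volume)))
  by_cases h1 : w' t = w t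
  · exact Or.inr (Or.inl ⟨ht, h1⟩)
  by_cases h2 : ψ t = ψ₀
  · exact Or.inr (Or.inr ⟨ht, h2⟩)
  exact Or.inl ⟨ht, mul_ne_zero (sub_ne_zero.2 h1) (sub_ne_zero.2 h2)⟩

/-! ### Convolution of two Tricomi densities -/

lemma beta_kernel_integrable {A B r : ℝ} (hA : 0 < A) (hB : 0 < B) (hr : 0 < r) :
    IntervalIntegrable (fun t : ℝ => t ^ (A - 1) * (r - t) ^ (B - 1)) volume 0 r := by
  have half : ∀ {A B : ℝ}, 0 < A →
      IntervalIntegrable (fun t : ℝ => t ^ (A - 1) * (r - t) ^ (B - 1)) volume 0 (r / 2) := by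
    intro A B hA
    refine (intervalIntegral.intervalIntegrable_rpow' (by linarith)).mul_continuousOn ?_
    refine ContinuousOn.rpow_const (by fun_prop) fun t ht => Or.inl ?_
    rw [Set.uIcc_of_le (by linarith)] at ht
    have := ht.2
    intro h0
    linarith
  refine (half hA).trans ?_
  have h := ((half (A := B) (B := A) hB).comp_sub_left r).symm
  have e : r - r / 2 = r / 2 := by ring
  rw [e, sub_zero] at h
  refine h.congr ?_
  intro t _
  simp only [sub_sub_cancel]
  ring

lemma beta_kernel_integral {A B r : ℝ} (hA : 0 < A) (hB : 0 < B) (hr : 0 < r) :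
    ∫ t in (0:ℝ)..r, t ^ (A - 1) * (r - t) ^ (B - 1) =
      r ^ (A + B - 1) * (Real.Gamma A * Real.Gamma B / Real.Gamma (A + B)) := by
  have h := Complex.betaIntegral_scaled A B hr
  rw [Complex.betaIntegral_eq_Gamma_mul_div A B (by simpa) (by simpa)] at h
  have h2 : ∫ x in (0:ℝ)..r, (x : ℂ) ^ ((A : ℂ) - 1) * ((r : ℂ) - x) ^ ((B : ℂ) - 1) =
      ((∫ t in (0:ℝ)..r, t ^ (A - 1) * (r - t) ^ (B - 1) : ℝ) : ℂ) := by
    rw [← intervalIntegral.integral_ofReal]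
    refine intervalIntegral.integral_congr fun t ht => ?_
    rw [Set.uIcc_of_le hr.le] at ht
    rw [Complex.ofReal_mul, Complex.ofReal_cpow ht.1, Complex.ofReal_cpow (sub_nonneg.2 ht.2)]
    push_cast
    rfl
  rw [h2, ← Complex.ofReal_add, Complex.Gamma_ofReal, Complex.Gamma_ofReal, Complex.Gamma_ofReal,
    ← Complex.ofReal_one, ← Complex.ofReal_sub, ← Complex.ofReal_cpow hr.le] at h
  exact_mod_cast h

lemma integral_fold {r : ℝ} (hr : 0 < r) {F : ℝ → ℝ} (hF : IntervalIntegrable F volume 0 r) :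
    ∫ t in (0:ℝ)..r, F t = ∫ t in Set.Ioo 0 (r / 2), (F t + F (r - t)) := by
  have hs1 : IntervalIntegrable F volume 0 (r / 2) := hF.mono_set (by
    rw [Set.uIcc_of_le (by linarith), Set.uIcc_of_le hr.le]
    exact Set.Icc_subset_Icc_right (by linarith))
  have hs2 : IntervalIntegrable F volume (r / 2) r := hF.mono_set (by
    rw [Set.uIcc_of_le (by linarith), Set.uIcc_of_le hr.le]
    exact Set.Icc_subset_Icc_left (by linarith))
  have e : r - r / 2 = r / 2 := by ring
  have h3 := (hs2.comp_sub_left r).symm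
  rw [sub_self, e] at h3
  rw [← intervalIntegral.integral_add_adjacent_intervals hs1 hs2, ← integral_Ioc_eq_integral_Ioo,
    ← intervalIntegral.integral_of_le (by linarith), intervalIntegral.integral_add hs1 h3,
    intervalIntegral.integral_comp_sub_left, sub_zero, e]

/-- The symmetrized beta kernel is a hyperbolic cosine in the log-odds variable. -/
lemma beta_kernel_symm {A B r t : ℝ} (ht : t ∈ Set.Ioo 0 (r / 2)) :
    t ^ (A - 1) * (r - t) ^ (B - 1) + (r - t) ^ (A - 1) * t ^ (B - 1) =
      (t * (r - t)) ^ ((A + B) / 2 - 1) *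
        (2 * Real.cosh ((A - B) / 2 * Real.log ((r - t) / t))) := by
  have h1 : 0 < t := ht.1
  have h2 : 0 < r - t := by have := ht.2; linarith
  rw [Real.cosh_eq, Real.log_div h2.ne' h1.ne', Real.mul_rpow h1.le h2.le]
  simp only [Real.rpow_def_of_pos h1, Real.rpow_def_of_pos h2]
  rw [mul_div_cancel₀ _ (two_ne_zero), mul_add]
  simp only [← Real.exp_add]
  rw [add_comm]
  congr 2 <;> ring

/-- The convolution, at `r`, of the (unnormalized) Laplace densities of two Tricomi functions. -/
noncomputable def tricomiConv (c A B r : ℝ) : ℝ :=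
  ∫ t in (0:ℝ)..r, (t ^ (A - 1) * (1 + t) ^ (-c)) * ((r - t) ^ (B - 1) * (1 + (r - t)) ^ (-c))

lemma tricomiConv_fold (c : ℝ) {A B r : ℝ} (hA : 0 < A) (hB : 0 < B) (hr : 0 < r) :
    tricomiConv c A B r = ∫ t in Set.Ioo 0 (r / 2),
        (t ^ (A - 1) * (r - t) ^ (B - 1) + (r - t) ^ (A - 1) * t ^ (B - 1)) *
          (1 + r + t * (r - t)) ^ (-c) ∧
    IntegrableOn (fun t => (t ^ (A - 1) * (r - t) ^ (B - 1) + (r - t) ^ (A - 1) * t ^ (B - 1)) *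
          (1 + r + t * (r - t)) ^ (-c)) (Set.Ioo 0 (r / 2)) := by
  set F : ℝ → ℝ := fun t => (t ^ (A - 1) * (r - t) ^ (B - 1)) * (1 + r + t * (r - t)) ^ (-c)
    with hF
  have hFi : IntervalIntegrable F volume 0 r := by
    refine (beta_kernel_integrable hA hB hr).mul_continuousOn ?_
    refine ContinuousOn.rpow_const (by fun_prop) fun t ht => Or.inl ?_
    rw [Set.uIcc_of_le hr.le] at ht
    have := mul_nonneg ht.1 (sub_nonneg.2 ht.2)
    intro h0
    linarith
  have hsymm : ∀ t, F t + F (r - t) =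
      (t ^ (A - 1) * (r - t) ^ (B - 1) + (r - t) ^ (A - 1) * t ^ (B - 1)) *
          (1 + r + t * (r - t)) ^ (-c) := by
    intro t
    simp only [hF, sub_sub_cancel]
    rw [mul_comm (r - t) t]
    ring
  refine ⟨?_, ?_⟩
  · simp only [← hsymm]
    rw [← integral_fold hr hFi, tricomiConv]
    refine intervalIntegral.integral_congr fun t ht => ?_
    rw [Set.uIcc_of_le hr.le] at ht
    have e : 1 + r + t * (r - t) = (1 + t) * (1 + (r - t)) := by ring
    simp only [hF]
    rw [e, Real.mul_rpow (by linarith [ht.1]) (by linarith [ht.2])]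
    ring
  · simp only [← hsymm]
    have h1 := (intervalIntegrable_iff_integrableOn_Ioo_of_le hr.le).1 hFi
    have h2 := hFi.comp_sub_left r
    rw [sub_self, sub_zero] at h2
    have h3 := (intervalIntegrable_iff_integrableOn_Ioo_of_le hr.le).1 h2.symm
    exact (h1.add h3).mono_set (Set.Ioo_subset_Ioo_right (by linarith))

/-- Spreading two parameters while keeping their sum fixed strictly increases the normalized
convolution density if `c > 0`, and strictly decreases it if `c < 0`. -/
lemma tricomiConv_spread {c A B A' B' r : ℝ} (hc : c ≠ 0) (hB : 0 < B) (hA' : 0 < A')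
    (hB' : 0 < B') (hsum : A + B = A' + B') (hBA : B ≤ A) (hAA : A < A') (hr : 0 < r) :
    c * ((Real.Gamma A * Real.Gamma B)⁻¹ * tricomiConv c A B r) <
      c * ((Real.Gamma A' * Real.Gamma B')⁻¹ * tricomiConv c A' B' r) := by
  have hA : 0 < A := hB.trans_le hBA
  set h : ℝ → ℝ → ℝ → ℝ :=
    fun A B t => t ^ (A - 1) * (r - t) ^ (B - 1) + (r - t) ^ (A - 1) * t ^ (B - 1) with hh
  set K : ℝ → ℝ → ℝ := fun A B => (Real.Gamma A * Real.Gamma B)⁻¹ with hK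
  have hKpos : ∀ {A B : ℝ}, 0 < A → 0 < B → 0 < K A B := fun ha hb =>
    inv_pos.2 (mul_pos (Real.Gamma_pos_of_pos ha) (Real.Gamma_pos_of_pos hb))
  set ψ : ℝ → ℝ := fun t => c * (1 + r + t * (r - t)) ^ (-c) with hψ
  have hmem : ∀ t ∈ Set.Ioo 0 (r / 2), 0 < t ∧ 0 < r - t := fun t ht =>
    ⟨ht.1, by have := ht.2; linarith⟩
  have hhpos : ∀ A B, ∀ t ∈ Set.Ioo 0 (r / 2), 0 < h A B t := by
    intro A B t ht
    have h1 := (hmem t ht).1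
    have h2 := (hmem t ht).2
    simp only [hh]; positivity
  have hval : ∀ {A B : ℝ}, 0 < A → 0 < B → c * (K A B * tricomiConv c A B r) =
      ∫ t in Set.Ioo 0 (r / 2), (K A B * h A B t) * ψ t := by
    intro A B ha hb
    rw [(tricomiConv_fold c ha hb hr).1, ← integral_const_mul, ← integral_const_mul]
    refine integral_congr_ae (Filter.Eventually.of_forall fun t => ?_)
    simp only [hψ, hh]; ring
  have hint1 : ∀ {A B : ℝ}, 0 < A → 0 < B →
      IntegrableOn (fun t => (K A B * h A B t) * ψ t) (Set.Ioo 0 (r / 2)) := by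
    intro A B ha hb
    refine (((tricomiConv_fold c ha hb hr).2.const_mul (K A B)).const_mul c).congr
      (Filter.Eventually.of_forall fun t => ?_)
    simp only [hψ, hh]; ring
  have hint0 : ∀ {A B : ℝ}, 0 < A → 0 < B →
      IntegrableOn (fun t => K A B * h A B t) (Set.Ioo 0 (r / 2)) := by
    intro A B ha hb
    have := (tricomiConv_fold 0 ha hb hr).2
    simp only [neg_zero, Real.rpow_zero, mul_one] at this
    exact this.const_mul _
  have hmass : ∀ {A B : ℝ}, 0 < A → 0 < B →
      ∫ t in Set.Ioo 0 (r / 2), K A B * h A B t = r ^ (A + B - 1) / Real.Gamma (A + B) := by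
    intro A B ha hb
    have h1 := integral_fold hr (beta_kernel_integrable ha hb hr)
    rw [beta_kernel_integral ha hb hr] at h1
    simp only [sub_sub_cancel] at h1
    rw [integral_const_mul, ← h1]
    have := (Real.Gamma_pos_of_pos ha).ne'
    have := (Real.Gamma_pos_of_pos hb).ne'
    simp only [hK]
    field_simp
  rw [show (Real.Gamma A * Real.Gamma B)⁻¹ = K A B from rfl,
    show (Real.Gamma A' * Real.Gamma B')⁻¹ = K A' B' from rfl, hval hA hB, hval hA' hB']
  have hprod : ∀ s ∈ Set.Ioo 0 (r / 2), ∀ t ∈ Set.Ioo 0 (r / 2), s < t →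
      s * (r - s) < t * (r - t) := by
    intro s hs t ht hst
    nlinarith [mul_pos (sub_pos.2 hst) (show 0 < r - s - t by linarith [hs.2, ht.2])]
  refine crossing_integral_lt (by linarith) ?_ ?_ ?_ ?_ (hint0 hA hB) (hint0 hA' hB')
    (hint1 hA hB) (hint1 hA' hB') (by rw [hmass hA hB, hmass hA' hB', hsum])
  · exact fun t ht => mul_pos (hKpos hA hB) (hhpos A B t ht)
  · intro s hs t ht hst
    have hlog : ∀ t ∈ Set.Ioo 0 (r / 2), 0 < Real.log ((r - t) / t) := by
      intro t ht
      refine Real.log_pos ?_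
      rw [lt_div_iff₀ ht.1]
      linarith [ht.2]
    have hlogs : Real.log ((r - t) / t) < Real.log ((r - s) / s) := by
      refine Real.log_lt_log (div_pos (hmem t ht).2 ht.1) ?_
      rw [div_lt_div_iff₀ ht.1 hs.1]
      nlinarith [mul_pos hr (sub_pos.2 hst)]
    have hcc := cosh_cross (d := (A - B) / 2) (d' := (A' - B') / 2) (by linarith) (by linarith)
      (hlog t ht) hlogs
    have e : ∀ A B, ∀ t ∈ Set.Ioo 0 (r / 2), h A B t = _ := fun A B t ht => beta_kernel_symm ht
    rw [e A B s hs, e A B t ht, e A' B' s hs, e A' B' t ht, ← hsum]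
    have p1 := Real.rpow_pos_of_pos (mul_pos (hmem s hs).1 (hmem s hs).2) ((A + B) / 2 - 1)
    have p2 := Real.rpow_pos_of_pos (mul_pos (hmem t ht).1 (hmem t ht).2) ((A + B) / 2 - 1)
    have p3 := mul_pos (hKpos hA hB) (hKpos hA' hB')
    have := mul_lt_mul_of_pos_left hcc (mul_pos p3 (mul_pos p1 p2))
    nlinarith
  · intro s hs t ht hst
    have h1 := hprod s hs t ht hst
    have h0 : 0 < s * (r - s) := mul_pos (hmem s hs).1 (hmem s hs).2
    simp only [hψ]
    rcases lt_or_gt_of_ne hc with hneg | hpos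
    · have : (1 + r + s * (r - s)) ^ (-c) < (1 + r + t * (r - t)) ^ (-c) :=
        Real.rpow_lt_rpow (by linarith) (by linarith) (by linarith)
      exact mul_lt_mul_of_neg_left this hneg
    · have : (1 + r + t * (r - t)) ^ (-c) < (1 + r + s * (r - s)) ^ (-c) :=
        Real.rpow_lt_rpow_of_neg (by linarith) (by linarith) (by linarith)
      exact mul_lt_mul_of_pos_left this hpos
  · have hcont : ContinuousOn ψ (Set.Icc 0 (r / 2)) := by
      refine continuousOn_const.mul (ContinuousOn.rpow_const (by fun_prop) fun t ht => Or.inl ?_)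
      have := mul_nonneg ht.1 (show 0 ≤ r - t by linarith [ht.2])
      intro h0
      linarith
    exact ((isCompact_Icc.image_of_continuousOn hcont).bddBelow).mono
      (Set.image_mono Set.Ioo_subset_Icc_self)

/-! ### Tricomi functions and products of two of them -/

/-- The Tricomi function `U(α, α + 1 - c, x)`; the parameter `c` is the same for all the factors
`U(a + p, b + p, x)`, namely `c = a - b + 1`. -/
noncomputable def tricomiV (c α x : ℝ) : ℝ :=
  (1 / Real.Gamma α) * ∫ t in Set.Ioi (0 : ℝ), (t ^ (α - 1) * (1 + t) ^ (-c)) * Real.exp (-x * t)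

lemma tricomiU_eq_tricomiV (a b p x : ℝ) :
    tricomiU (a + p) (b + p) x = tricomiV (a - b + 1) (a + p) x := by
  rw [tricomiU, tricomiV, show b + p - (a + p) - 1 = -(a - b + 1) by ring]

lemma one_add_rpow_le (c : ℝ) {u t : ℝ} (hu : 0 ≤ u) (hut : u ≤ t) :
    (1 + u) ^ (-c) ≤ (1 + t) ^ ⌈|c|⌉₊ := by
  calc (1 + u) ^ (-c) ≤ (1 + u) ^ ((⌈|c|⌉₊ : ℕ) : ℝ) :=
        Real.rpow_le_rpow_of_exponent_le (by linarith)
          ((neg_le_abs c).trans (Nat.le_ceil _))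
    _ = (1 + u) ^ ⌈|c|⌉₊ := Real.rpow_natCast _ _
    _ ≤ (1 + t) ^ ⌈|c|⌉₊ := pow_le_pow_left₀ (by linarith) (by linarith) _

lemma dominating_integrable {α x : ℝ} (hα : 0 < α) (hx : 0 < x) (N : ℕ) :
    IntegrableOn (fun t : ℝ => (t ^ (α - 1) * (1 + t) ^ N) * Real.exp (-x * t)) (Set.Ioi 0) := by
  have h : ∀ β : ℝ, -1 < β →
      IntegrableOn (fun t : ℝ => t ^ β * Real.exp (-x * t)) (Set.Ioi 0) := by
    intro β hβ
    simpa using integrableOn_rpow_mul_exp_neg_mul_rpow hβ one_pos hx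
  have h1 := h (α - 1) (by linarith)
  have h2 := h (α - 1 + N) (by have := Nat.cast_nonneg (α := ℝ) N; linarith)
  refine Integrable.mono' ((h1.add h2).const_mul (2 ^ (N - 1))) ?_ ?_
  · refine ContinuousOn.aestronglyMeasurable ?_ measurableSet_Ioi
    refine ContinuousOn.mul (ContinuousOn.mul ?_ (by fun_prop)) (by fun_prop)
    exact continuousOn_id.rpow_const fun t ht => Or.inl (ne_of_gt ht)
  · refine (ae_restrict_iff' measurableSet_Ioi).2 (Filter.Eventually.of_forall fun t ht => ?_)
    have ht0 : (0:ℝ) < t := ht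
    rw [Real.norm_of_nonneg (by positivity)]
    have h3 := add_pow_le (zero_le_one) ht0.le N
    have h4 : 0 ≤ t ^ (α - 1) * Real.exp (-x * t) := by positivity
    have h5 := mul_le_mul_of_nonneg_left h3 h4
    simp only [Pi.add_apply]
    rw [Real.rpow_add ht0, Real.rpow_natCast]
    rw [one_pow] at h5
    linarith

lemma kernel_integrable (c : ℝ) {α x : ℝ} (hα : 0 < α) (hx : 0 < x) :
    IntegrableOn (fun t : ℝ => (t ^ (α - 1) * (1 + t) ^ (-c)) * Real.exp (-x * t))
      (Set.Ioi 0) := by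
  refine Integrable.mono' (dominating_integrable hα hx ⌈|c|⌉₊) ?_ ?_
  · refine ContinuousOn.aestronglyMeasurable ?_ measurableSet_Ioi
    refine ContinuousOn.mul (ContinuousOn.mul ?_ ?_) (by fun_prop)
    · exact continuousOn_id.rpow_const fun t ht => Or.inl (ne_of_gt ht)
    · refine ContinuousOn.rpow_const (by fun_prop) fun t ht => Or.inl ?_
      have : (0:ℝ) < t := ht
      linarith
  · refine (ae_restrict_iff' measurableSet_Ioi).2 (Filter.Eventually.of_forall fun t ht => ?_)
    have ht0 : (0:ℝ) < t := ht
    rw [Real.norm_of_nonneg (by positivity)]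
    gcongr
    exact one_add_rpow_le c ht0.le le_rfl

lemma integral_Ioi_pos {g : ℝ → ℝ} (hg : ∀ t, 0 < t → 0 < g t) (hi : IntegrableOn g (Set.Ioi 0)) :
    0 < ∫ t in Set.Ioi (0 : ℝ), g t := by
  rw [setIntegral_pos_iff_support_of_nonneg_ae ((ae_restrict_iff' measurableSet_Ioi).2
    (Filter.Eventually.of_forall fun t ht => (hg t ht).le)) hi]
  have : Function.support g ∩ Set.Ioi 0 = Set.Ioi 0 :=
    Set.inter_eq_right.2 fun t ht => (hg t ht).ne'
  rw [this]
  simp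

lemma tricomiV_pos (c : ℝ) {α x : ℝ} (hα : 0 < α) (hx : 0 < x) : 0 < tricomiV c α x := by
  refine mul_pos (one_div_pos.2 (Real.Gamma_pos_of_pos hα))
    (integral_Ioi_pos (fun t ht => ?_) (kernel_integrable c hα hx))
  positivity

lemma tricomiV_cm (c : ℝ) {α : ℝ} (hα : 0 < α) : CompletelyMonotonicOn (tricomiV c α) :=
  cm_const_mul (cm_laplace (fun t ht => by positivity) fun x hx => kernel_integrable c hα hx)
    (one_div_pos.2 (Real.Gamma_pos_of_pos hα)).le

/-- `U(α, β, x)` is asymptotic to `x ^ (-α)` at infinity. -/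
lemma tricomiV_asymp (c : ℝ) {α : ℝ} (hα : 0 < α) :
    Filter.Tendsto (fun x => x ^ α * tricomiV c α x) Filter.atTop (nhds 1) := by
  have hG := Real.Gamma_pos_of_pos hα
  have hlim : Filter.Tendsto
      (fun x : ℝ => ∫ s in Set.Ioi (0 : ℝ), (s ^ (α - 1) * (1 + s / x) ^ (-c)) * Real.exp (-1 * s))
      Filter.atTop (nhds (∫ s in Set.Ioi (0 : ℝ), s ^ (α - 1) * Real.exp (-1 * s))) := by
    refine tendsto_integral_filter_of_dominated_convergence
      (fun s : ℝ => (s ^ (α - 1) * (1 + s) ^ ⌈|c|⌉₊) * Real.exp (-1 * s)) ?_ ?_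
      (dominating_integrable hα one_pos _) ?_
    · filter_upwards [Filter.eventually_ge_atTop 1] with x hx
      refine ContinuousOn.aestronglyMeasurable ?_ measurableSet_Ioi
      refine ContinuousOn.mul (ContinuousOn.mul ?_ ?_) (by fun_prop)
      · exact continuousOn_id.rpow_const fun t ht => Or.inl (ne_of_gt ht)
      · refine ContinuousOn.rpow_const (by fun_prop) fun t ht => Or.inl ?_
        have ht : (0:ℝ) < t := ht
        positivity
    · filter_upwards [Filter.eventually_ge_atTop 1] with x hx
      refine (ae_restrict_iff' measurableSet_Ioi).2 (Filter.Eventually.of_forall fun s hs => ?_)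
      have hs0 : (0:ℝ) < s := hs
      rw [Real.norm_of_nonneg (by positivity)]
      gcongr
      exact one_add_rpow_le c (by positivity) (div_le_self hs0.le hx)
    · refine (ae_restrict_iff' measurableSet_Ioi).2 (Filter.Eventually.of_forall fun s hs => ?_)
      have h1 : Filter.Tendsto (fun x : ℝ => 1 + s / x) Filter.atTop (nhds 1) := by
        simpa using (tendsto_const_nhds (x := (1:ℝ))).add
          ((tendsto_const_nhds (x := s) (f := Filter.atTop)).div_atTop Filter.tendsto_id)
      have h2 := h1.rpow_const (p := -c) (Or.inl one_ne_zero)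
      rw [Real.one_rpow] at h2
      simpa using (h2.const_mul (s ^ (α - 1))).mul_const (Real.exp (-1 * s))
  have hΓ : ∫ s in Set.Ioi (0 : ℝ), s ^ (α - 1) * Real.exp (-1 * s) = Real.Gamma α := by
    rw [Real.Gamma_eq_integral hα]
    refine integral_congr_ae (Filter.Eventually.of_forall fun s => ?_)
    simp [mul_comm]
  rw [hΓ] at hlim
  have h3 := hlim.const_mul (1 / Real.Gamma α)
  rw [one_div_mul_cancel hG.ne'] at h3
  refine h3.congr' ?_
  filter_upwards [Filter.eventually_gt_atTop 0] with x hx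
  have h4 := integral_comp_mul_left_Ioi'
    (fun s : ℝ => (s ^ (α - 1) * (1 + s / x) ^ (-c)) * Real.exp (-1 * s)) 0 hx
  rw [mul_zero] at h4
  rw [← h4, tricomiV, mul_left_comm, smul_eq_mul]
  refine congrArg (fun y => 1 / Real.Gamma α * y) ?_
  rw [← integral_const_mul, ← integral_const_mul]
  refine setIntegral_congr_fun measurableSet_Ioi fun t ht => ?_
  have ht0 : (0:ℝ) < t := ht
  have h5 : x ^ α = x * x ^ (α - 1) := by
    rw [Real.rpow_sub_one hx.ne']; field_simp
  rw [Real.mul_rpow hx.le ht0.le, mul_div_cancel_left₀ _ hx.ne', h5]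
  ring_nf

lemma tricomiV_mul (c : ℝ) {A B x : ℝ} (hA : 0 < A) (hB : 0 < B) (hx : 0 < x) :
    tricomiV c A x * tricomiV c B x = ∫ r in Set.Ioi (0 : ℝ),
        ((Real.Gamma A * Real.Gamma B)⁻¹ * tricomiConv c A B r) * Real.exp (-x * r) ∧
    IntegrableOn (fun r => ((Real.Gamma A * Real.Gamma B)⁻¹ * tricomiConv c A B r) *
      Real.exp (-x * r)) (Set.Ioi 0) := by
  set f : ℝ → ℝ → ℝ := fun α t => (t ^ (α - 1) * (1 + t) ^ (-c)) * Real.exp (-x * t) with hf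
  have hinner : ∀ r, ∫ t in (0:ℝ)..r, ContinuousLinearMap.mul ℝ ℝ (f A t) (f B (r - t)) =
      tricomiConv c A B r * Real.exp (-x * r) := by
    intro r
    rw [tricomiConv, ← intervalIntegral.integral_mul_const]
    congr 1
    funext t
    have : Real.exp (-x * r) = Real.exp (-x * t) * Real.exp (-x * (r - t)) := by
      rw [← Real.exp_add]; ring_nf
    simp only [ContinuousLinearMap.mul_apply', hf]
    rw [this]; ring
  have h1 := integral_posConvolution (kernel_integrable c hA hx) (kernel_integrable c hB hx)
    (ContinuousLinearMap.mul ℝ ℝ)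
  have h2 := (integrable_posConvolution (kernel_integrable c hA hx) (kernel_integrable c hB hx)
    (ContinuousLinearMap.mul ℝ ℝ)).integrableOn (s := Set.Ioi 0)
  have h3 : IntegrableOn (fun r => tricomiConv c A B r * Real.exp (-x * r)) (Set.Ioi 0) := by
    refine h2.congr_fun (fun r hr => ?_) measurableSet_Ioi
    rw [posConvolution, Set.indicator_of_mem hr]
    exact hinner r
  refine ⟨?_, ?_⟩
  · simp only [mul_assoc, integral_const_mul]
    have h4 : ∫ r in Set.Ioi (0 : ℝ), tricomiConv c A B r * Real.exp (-x * r) =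
        (∫ t in Set.Ioi (0 : ℝ), f A t) * ∫ t in Set.Ioi (0 : ℝ), f B t := by
      rw [← ContinuousLinearMap.mul_apply' ℝ ℝ, ← h1]
      refine integral_congr_ae (Filter.Eventually.of_forall fun r => ?_)
      exact (hinner r).symm
    rw [h4, tricomiV, tricomiV, mul_inv]
    ring
  · simp only [mul_assoc]
    exact h3.const_mul _

/-- The case of two factors. -/
lemma tricomiV_pair {c A B A' B' : ℝ} (hc : c ≠ 0) (hB : 0 < B) (hA' : 0 < A')
    (hB' : 0 < B') (hsum : A + B = A' + B') (hBA : B ≤ A) (hAA : A < A') :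
    CompletelyMonotonicOn (fun x =>
      c * (tricomiV c A' x * tricomiV c B' x - tricomiV c A x * tricomiV c B x)) ∧
    ∀ x, 0 < x → 0 < c * (tricomiV c A' x * tricomiV c B' x - tricomiV c A x * tricomiV c B x) := by
  have hA : 0 < A := hB.trans_le hBA
  set g : ℝ → ℝ := fun r => c * ((Real.Gamma A' * Real.Gamma B')⁻¹ * tricomiConv c A' B' r) -
    c * ((Real.Gamma A * Real.Gamma B)⁻¹ * tricomiConv c A B r) with hg
  have hgpos : ∀ r, 0 < r → 0 < g r := fun r hr =>
    sub_pos.2 (tricomiConv_spread hc hB hA' hB' hsum hBA hAA hr)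
  have hge : ∀ x, (fun r => g r * Real.exp (-x * r)) = fun r =>
      c * (((Real.Gamma A' * Real.Gamma B')⁻¹ * tricomiConv c A' B' r) * Real.exp (-x * r)) -
      c * (((Real.Gamma A * Real.Gamma B)⁻¹ * tricomiConv c A B r) * Real.exp (-x * r)) := by
    intro x; funext r; simp only [hg]; ring
  have hgi : ∀ x, 0 < x → IntegrableOn (fun r => g r * Real.exp (-x * r)) (Set.Ioi 0) := by
    intro x hx
    rw [hge]
    exact ((tricomiV_mul c hA' hB' hx).2.const_mul c).sub ((tricomiV_mul c hA hB hx).2.const_mul c)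
  have hval : ∀ x, 0 < x →
      c * (tricomiV c A' x * tricomiV c B' x - tricomiV c A x * tricomiV c B x) =
        ∫ r in Set.Ioi (0 : ℝ), g r * Real.exp (-x * r) := by
    intro x hx
    rw [hge, integral_sub ((tricomiV_mul c hA' hB' hx).2.const_mul c)
      ((tricomiV_mul c hA hB hx).2.const_mul c), integral_const_mul, integral_const_mul,
      (tricomiV_mul c hA' hB' hx).1, (tricomiV_mul c hA hB hx).1]
    ring
  refine ⟨cm_congr hval (cm_laplace (fun r hr => (hgpos r hr).le) hgi), fun x hx => ?_⟩
  rw [hval x hx]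
  exact integral_Ioi_pos (fun r hr => mul_pos (hgpos r hr) (Real.exp_pos _)) (hgi x hx)

/-! ### Products of several factors -/

/-- The comparison of products along a majorization, for both signs of `c` at once. -/
lemma tricomiV_majorizes {n : ℕ} {a c : ℝ} (hc : c ≠ 0) {p q : Fin n → ℝ}
    (hp : ∀ j, -a < p j) (hq : ∀ j, -a < q j) (hmaj : Majorizes p q) :
    CompletelyMonotonicOn (fun x =>
      c * (∏ j, tricomiV c (a + q j) x - ∏ j, tricomiV c (a + p j) x)) ∧
    ∀ x, 0 < x → 0 < c * (∏ j, tricomiV c (a + q j) x - ∏ j, tricomiV c (a + p j) x) := by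
  refine majorization_induction a (fun p q => CompletelyMonotonicOn (fun x =>
      c * (∏ j, tricomiV c (a + q j) x - ∏ j, tricomiV c (a + p j) x)) ∧
    ∀ x, 0 < x → 0 < c * (∏ j, tricomiV c (a + q j) x - ∏ j, tricomiV c (a + p j) x))
    ?_ ?_ p hp hmaj.1 _ q rfl hq hmaj.2.2.1 hmaj.2.2.2.1 hmaj.2.2.2.2
  · rintro x y z ⟨h1, h2⟩ ⟨h3, h4⟩
    refine ⟨cm_congr (fun X _ => ?_) (cm_add h1 h3), fun X hX => ?_⟩
    · ring
    · have := h2 X hX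
      have := h4 X hX
      linarith
  · intro x y j k hjk hx hy hother hsum hle hlt
    have hpair := tricomiV_pair (A := a + x j) (B := a + x k) (A' := a + y j) (B' := a + y k) hc
      (by linarith [hx k]) (by linarith [hy j]) (by linarith [hy k]) (by linarith) (by linarith)
      (by linarith)
    have hsplit : ∀ (z : Fin n → ℝ) (X : ℝ), ∏ i, tricomiV c (a + z i) X =
        (tricomiV c (a + z j) X * tricomiV c (a + z k) X) *
          ∏ i ∈ (Finset.univ.erase j).erase k, tricomiV c (a + z i) X := by
      intro z X
      rw [← Finset.mul_prod_erase Finset.univ _ (Finset.mem_univ j),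
        ← Finset.mul_prod_erase (Finset.univ.erase j) _
          (Finset.mem_erase.2 ⟨hjk.symm, Finset.mem_univ k⟩), mul_assoc]
    have hrest : ∀ X, ∏ i ∈ (Finset.univ.erase j).erase k, tricomiV c (a + x i) X =
        ∏ i ∈ (Finset.univ.erase j).erase k, tricomiV c (a + y i) X := by
      intro X
      refine Finset.prod_congr rfl fun i hi => ?_
      simp only [Finset.mem_erase] at hi
      rw [hother i hi.2.1 hi.1]
    have heq : ∀ X, c * (∏ i, tricomiV c (a + y i) X - ∏ i, tricomiV c (a + x i) X) =
        c * (tricomiV c (a + y j) X * tricomiV c (a + y k) X -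
          tricomiV c (a + x j) X * tricomiV c (a + x k) X) *
          ∏ i ∈ (Finset.univ.erase j).erase k, tricomiV c (a + y i) X := by
      intro X
      rw [hsplit y, hsplit x, hrest]; ring
    refine ⟨cm_congr (fun X _ => heq X) (cm_mul hpair.1
      (cm_prod _ fun i _ => tricomiV_cm c (by linarith [hy i]))), fun X hX => ?_⟩
    rw [heq]
    exact mul_pos (hpair.2 X hX)
      (Finset.prod_pos fun i _ => tricomiV_pos c (by linarith [hy i]) hX)

/-- An inequality `k ∏ U(a + p_j, b + p_j, x) ≤ l ∏ U(a + q_j, b + q_j, x)` valid for all `x`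
passes to the limit `x → ∞`, where both products are asymptotic to the same power of `x`. -/
lemma const_le_of_prod_le {n : ℕ} {a c k l : ℝ} {p q : Fin n → ℝ}
    (hp : ∀ j, -a < p j) (hq : ∀ j, -a < q j) (hsum : ∑ j, p j = ∑ j, q j)
    (h : ∀ x, 0 < x →
      k * ∏ j, tricomiV c (a + p j) x ≤ l * ∏ j, tricomiV c (a + q j) x) : k ≤ l := by
  have hlim : ∀ z : Fin n → ℝ, (∀ j, -a < z j) → Filter.Tendsto
      (fun x : ℝ => ∏ j, (x ^ (a + z j) * tricomiV c (a + z j) x)) Filter.atTop (nhds 1) := by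
    intro z hz
    have := tendsto_finsetProd (Finset.univ : Finset (Fin n)) fun j _ =>
      tricomiV_asymp c (show 0 < a + z j by linarith [hz j])
    simpa using this
  have h1 := (hlim p hp).const_mul k
  have h2 := (hlim q hq).const_mul l
  rw [mul_one] at h1 h2
  refine le_of_tendsto_of_tendsto h1 h2 ?_
  filter_upwards [Filter.eventually_gt_atTop 0] with x hx
  have hpow : ∏ j, x ^ (a + p j) = ∏ j, x ^ (a + q j) := by
    rw [← Real.rpow_sum_of_pos hx, ← Real.rpow_sum_of_pos hx, Finset.sum_add_distrib,
      Finset.sum_add_distrib, hsum]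
  simp only [Finset.prod_mul_distrib]
  rw [hpow]
  have h3 : 0 ≤ ∏ j, x ^ (a + q j) := Finset.prod_nonneg fun j _ => (Real.rpow_pos_of_pos hx _).le
  nlinarith [mul_le_mul_of_nonneg_left (h x hx) h3]

theorem stmt18 (a b : ℝ) (ha : 0 < a)
    (n : ℕ) (hn : 2 ≤ n) (p q : Fin n → ℝ)
    (hp : ∀ j, -a < p j) (hq : ∀ j, -a < q j) (hmaj : Majorizes p q) (ρ : ℝ) :
    (0 < a - b + 1 →
      (CompletelyMonotonicOn (fun x =>
          ρ * ∏ j, tricomiU (a + q j) (b + q j) x - ∏ j, tricomiU (a + p j) (b + p j) x) ↔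
        1 ≤ ρ)) ∧
    (a - b + 1 < 0 →
      (CompletelyMonotonicOn (fun x =>
          ∏ j, tricomiU (a + p j) (b + p j) x - ρ * ∏ j, tricomiU (a + q j) (b + q j) x) ↔
        ρ ≤ 1)) ∧
    (0 < a - b + 1 → ∀ x : ℝ, 0 < x →
      ∏ j, tricomiU (a + p j) (b + p j) x / tricomiU (a + q j) (b + q j) x < 1) ∧
    (a - b + 1 < 0 → ∀ x : ℝ, 0 < x →
      1 < ∏ j, tricomiU (a + p j) (b + p j) x / tricomiU (a + q j) (b + q j) x) := by
  simp only [tricomiU_eq_tricomiV]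
  set c := a - b + 1 with hc
  set P : ℝ → ℝ := fun x => ∏ j, tricomiV c (a + p j) x with hP
  set Q : ℝ → ℝ := fun x => ∏ j, tricomiV c (a + q j) x with hQ
  have hcmQ : CompletelyMonotonicOn Q :=
    cm_prod _ fun j _ => tricomiV_cm c (by linarith [hq j])
  have hQpos : ∀ x, 0 < x → 0 < Q x := fun x hx =>
    Finset.prod_pos fun j _ => tricomiV_pos c (by linarith [hq j]) hx
  have hmain : c ≠ 0 → CompletelyMonotonicOn (fun x => c * (Q x - P x)) ∧
      ∀ x, 0 < x → 0 < c * (Q x - P x) := fun hc0 => tricomiV_majorizes hc0 hp hq hmaj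
  have hsum := hmaj.2.2.2.1
  refine ⟨fun hpos => ⟨fun h => ?_, fun h => ?_⟩, fun hneg => ⟨fun h => ?_, fun h => ?_⟩,
    fun hpos x hx => ?_, fun hneg x hx => ?_⟩
  · refine const_le_of_prod_le (c := c) hp hq hsum fun x hx => ?_
    have := h.2 0 x hx
    simp only [pow_zero, iteratedDerivWithin_zero, one_mul] at this
    linarith
  · refine cm_congr (g := fun x => (ρ - 1) * Q x + c⁻¹ * (c * (Q x - P x))) (fun x _ => ?_)
      (cm_add (cm_const_mul hcmQ (by linarith))
        (cm_const_mul (hmain hpos.ne').1 (inv_nonneg.2 hpos.le)))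
    simp only [hP, hQ]
    field_simp [hpos.ne']
    ring
  · refine const_le_of_prod_le (c := c) hq hp hsum.symm fun x hx => ?_
    have := h.2 0 x hx
    simp only [pow_zero, iteratedDerivWithin_zero, one_mul] at this
    linarith
  · refine cm_congr (g := fun x => (1 - ρ) * Q x + (-c)⁻¹ * (c * (Q x - P x))) (fun x _ => ?_)
      (cm_add (cm_const_mul hcmQ (by linarith))
        (cm_const_mul (hmain hneg.ne).1 (inv_nonneg.2 (by linarith))))
    have hne := hneg.ne
    simp only [hP, hQ, inv_neg]
    field_simp
    ring
  · rw [Finset.prod_div_distrib, div_lt_one (hQpos x hx)]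
    exact sub_pos.1 (pos_of_mul_pos_right ((hmain hpos.ne').2 x hx) hpos.le)
  · rw [Finset.prod_div_distrib, one_lt_div (hQpos x hx)]
    exact sub_neg.1 (neg_of_mul_pos_right ((hmain hneg.ne).2 x hx) hneg.le)
end
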